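/- Assume ε ∉ (1/2)ℤ. Then there exists a constant C > 0, depending only on V₁, V₂ and ε, such that for every C^∞ 1-periodic φ : ℝ → ℂ, every positive integer N (h = 1/N), and every vector (ψ₀,…,ψ_{N−1}) ∈ ℂ^N with associated step function ψ_h = Σ_i ψ_i χ_{i+ε}, the consistency bound | h Σ_{i=0}^{N−1} ψ_i (Wφ)(t_{i+ε}) − Σ_{i=0}^{N−1} ψ_i [ (V₁φ′)(s_{i+ε}) − (V₁φ′)(s_{i+1+ε}) ] − h² Σ_{i,j=0}^{N−1} ψ_i V₂(t_{i+ε}, t_j) φ(t_j) + h C̄₁(ε) ∫₀¹ ψ_h(t) A₂(t,t) φ(t) dt | ≤ C h² ‖ψ_h‖₀ ‖φ‖₃ holds, where C̄₁(ε) = −(1/(2πi)) log(4 sin²(πε)). -/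

import Mathlib

noncomputable section

/-- Smooth kernel data, 1-periodic in each variable. -/
def SPK (A : ℝ → ℝ → ℂ) : Prop :=
  ContDiff ℝ (⊤ : ℕ∞) (fun p : ℝ × ℝ => A p.1 p.2) ∧
    (∀ s t, A (s + 1) t = A s t) ∧ (∀ s t, A s (t + 1) = A s t)

/-- Logarithmic kernel `V(s,t) = (i/(2π)) A(s,t) log(sin²(π(s−t))) + K(s,t)`. -/
def logKer (A K : ℝ → ℝ → ℂ) (s t : ℝ) : ℂ :=
  Complex.I / (2 * Real.pi) * A s t * (Real.log (Real.sin (Real.pi * (s - t)) ^ 2) : ℂ) + K s t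

/-- Grid point `s_{j+ε} = (j − 1/2 + ε)h`. -/
def sg (h ε : ℝ) (j : ℤ) : ℝ := ((j : ℝ) - 1 / 2 + ε) * h

/-- Grid point `t_{j+ε} = (j + ε)h`. -/
def tg (h ε : ℝ) (j : ℤ) : ℝ := ((j : ℝ) + ε) * h

/-- Integral operator with kernel `V`. -/
def Vop (V : ℝ → ℝ → ℂ) (φ : ℝ → ℂ) (s : ℝ) : ℂ := ∫ t in (0:ℝ)..1, V s t * φ t

/-- Hypersingular operator `W = −D V₁ D + V₂`. -/
def Wop (V1 V2 : ℝ → ℝ → ℂ) (φ : ℝ → ℂ) (s : ℝ) : ℂ :=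
  -deriv (Vop V1 (deriv φ)) s + Vop V2 φ s

/-- Nyström matrix entries `W^ε_{ij}`. -/
def Wmat (V1 V2 : ℝ → ℝ → ℂ) (h ε : ℝ) (i j : ℤ) : ℂ :=
  V1 (sg h ε (i + 1)) (sg h 0 (j + 1)) - V1 (sg h ε i) (sg h 0 (j + 1))
    - V1 (sg h ε (i + 1)) (sg h 0 j) + V1 (sg h ε i) (sg h 0 j)
    + (h : ℂ) ^ 2 * V2 (tg h ε i) (tg h 0 j)

/-- Fourier coefficient of a 1-periodic function. -/
def fc (u : ℝ → ℂ) (m : ℤ) : ℂ :=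
  ∫ t in (0:ℝ)..1, u t * Complex.exp (-(2 * Real.pi * Complex.I * (m : ℂ) * (t : ℂ)))

/-- Periodic Sobolev norm of order `r`. -/
def sobNorm (r : ℝ) (u : ℝ → ℂ) : ℝ :=
  Real.sqrt (‖fc u 0‖ ^ 2 +
    ∑' m : ℤ, if m = 0 then 0 else |(m : ℝ)| ^ (2 * r) * ‖fc u m‖ ^ 2)

/-- 1-periodic step function on the ε-shifted grid with coefficients `v`. -/
def stepf (N : ℕ) (ε : ℝ) (v : ZMod N → ℂ) (s : ℝ) : ℂ :=
  v ((⌊s * N + 1 / 2 - ε⌋ : ℤ) : ZMod N)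

/-- Midpoint quadrature error matrix entries `E^ε_{ij}`. -/
def Emat (V2 : ℝ → ℝ → ℂ) (h ε : ℝ) (i j : ℤ) : ℂ :=
  (∫ s in (sg h ε i)..(sg h ε (i + 1)), ∫ t in (sg h 0 j)..(sg h 0 (j + 1)), V2 s t)
    - (h : ℂ) ^ 2 * V2 (tg h ε i) (tg h 0 j)

/-- Spectral (ℓ²-operator) norm of a complex `N×N` matrix. -/
def specNorm {N : ℕ} (M : Matrix (Fin N) (Fin N) ℂ) : ℝ :=
  ‖LinearMap.toContinuousLinearMap (Matrix.toEuclideanLin M)‖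

/-- The function `C̄₁(t) = −(1/(2πi)) log(4 sin²(πt))`. -/
def Cbar1 (t : ℝ) : ℂ :=
  -(1 / (2 * Real.pi * Complex.I)) * (Real.log (4 * Real.sin (Real.pi * t) ^ 2) : ℂ)

end

/-!
On the grid of mesh `h = 1 / N` the consistency error splits node by node into two parts.

* The derivative of `g = V₁φ'` against its central difference over the cell `(s_i, s_{i+1})`. The
  squared error is at most `h ^ 5 ∫ |g'''| ^ 2` over the cell, and `V₁ ∘ d/dt` is bounded on every
  periodic Sobolev space of integer order: the periodic logarithm `log (4 sin² (πx))` has Fourier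
  coefficients `-1 / |m|`, so convolution with it gains one derivative, and the variable coefficient
  `A₁` changes this by a kernel whose singularity is cancelled by a zero on the diagonal.
* The quadrature error of `V₂φ`. Expanding the density in Fourier modes, the rectangle rule at `s`
  misses the convolution with the logarithm by `h log (4 sin² (πs / h))` times the value of the
  density at `s`, up to `O(h ^ 2)`; this follows from `∏_j 2 sin (π (s - j / N)) = 2 sin (πNs)` up
  to sign. At `s = t_{i+ε}` the logarithm is the constant `log (4 sin² (πε))`, and the correction is
  the one provided by `C̄₁(ε)`.

Cauchy–Schwarz over the nodes combines the local bounds.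
-/

open MeasureTheory Set Filter Topology intervalIntegral

/-! ### Fourier coefficients -/

/-- The trigonometric monomial `x ↦ exp (2πimx)`, lifted from the circle to the line. -/
noncomputable def trigMonomial (m : ℤ) (x : ℝ) : ℂ := fourier m (x : UnitAddCircle)

local notation "𝐞" => trigMonomial

section TrigMonomial

variable (m : ℤ) (x : ℝ)

lemma trigMonomial_eq_exp : 𝐞 m x = Complex.exp (2 * Real.pi * Complex.I * m * x) := by
  simp [trigMonomial]

@[simp] lemma trigMonomial_zero : 𝐞 0 x = 1 := fourier_zero

@[simp] lemma trigMonomial_zero_right : 𝐞 m 0 = 1 := by simp [trigMonomial_eq_exp]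

@[simp] lemma norm_trigMonomial : ‖𝐞 m x‖ = 1 := Circle.norm_coe _

lemma trigMonomial_add (n : ℤ) : 𝐞 (m + n) x = 𝐞 m x * 𝐞 n x := fourier_add

lemma trigMonomial_add_right (y : ℝ) : 𝐞 m (x + y) = 𝐞 m x * 𝐞 m y := by
  simp only [trigMonomial_eq_exp, ← Complex.exp_add]
  push_cast
  ring_nf

lemma trigMonomial_neg_right : 𝐞 m (-x) = 𝐞 (-m) x := by
  simp [trigMonomial_eq_exp]

lemma trigMonomial_sub_right (y : ℝ) : 𝐞 m (x - y) = 𝐞 m x * 𝐞 (-m) y := by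
  rw [sub_eq_add_neg, trigMonomial_add_right, trigMonomial_neg_right]

lemma trigMonomial_natCast_mul_right (n : ℕ) : 𝐞 m (n * x) = 𝐞 m x ^ n := by
  rw [trigMonomial_eq_exp, trigMonomial_eq_exp, ← Complex.exp_nat_mul]
  push_cast
  ring_nf

lemma trigMonomial_periodic : Function.Periodic (𝐞 m) 1 := fun x ↦ by
  rw [trigMonomial, trigMonomial, AddCircle.coe_add_period]

@[simp] lemma trigMonomial_one_right : 𝐞 m 1 = 1 := by
  simpa using trigMonomial_periodic m 0

lemma hasDerivAt_trigMonomial :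
    HasDerivAt (𝐞 m) (2 * Real.pi * Complex.I * m * 𝐞 m x) x := by
  have h := hasDerivAt_fourier 1 m x
  simp only [Complex.ofReal_one, div_one] at h
  exact h

lemma contDiff_trigMonomial {n : WithTop ℕ∞} : ContDiff ℝ n (𝐞 m) := by
  rw [funext (trigMonomial_eq_exp m)]
  exact (contDiff_const.mul Complex.ofRealCLM.contDiff).cexp

lemma continuous_trigMonomial : Continuous (𝐞 m) :=
  (contDiff_trigMonomial m (n := 0)).continuous

lemma integral_trigMonomial : ∫ x in (0 : ℝ)..1, 𝐞 m x = if m = 0 then 1 else 0 := by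
  split_ifs with hm
  · simp [hm]
  · have hc : 2 * Real.pi * Complex.I * m ≠ 0 := by simp [hm]
    have hderiv (x : ℝ) : HasDerivAt (fun x ↦ 𝐞 m x / (2 * Real.pi * Complex.I * m)) (𝐞 m x) x := by
      simpa only [mul_div_cancel_left₀ _ hc] using (hasDerivAt_trigMonomial m x).div_const
        (2 * Real.pi * Complex.I * m)
    rw [integral_eq_sub_of_hasDerivAt (fun x _ ↦ hderiv x)
      ((continuous_trigMonomial m).intervalIntegrable _ _)]
    simp

end TrigMonomial

lemma fc_eq_integral (u : ℝ → ℂ) (m : ℤ) : fc u m = ∫ t in (0 : ℝ)..1, u t * 𝐞 (-m) t := by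
  unfold fc
  congr! 3 with t
  rw [trigMonomial_eq_exp]
  push_cast
  ring_nf

lemma fc_zero (u : ℝ → ℂ) : fc u 0 = ∫ t in (0 : ℝ)..1, u t := by
  simp [fc_eq_integral]

lemma fc_eq_fourierCoeffOn (u : ℝ → ℂ) (m : ℤ) :
    fc u m = fourierCoeffOn (zero_lt_one' ℝ) u m := by
  rw [fourierCoeffOn_eq_integral, fc_eq_integral]
  simp [trigMonomial, mul_comm]

lemma hasSum_sq_norm_fc {f : ℝ → ℂ} (hf : Continuous f) :
    HasSum (fun m ↦ ‖fc f m‖ ^ 2) (∫ x in (0 : ℝ)..1, ‖f x‖ ^ 2) := by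
  obtain ⟨C, hC⟩ := (isCompact_Icc (a := (0 : ℝ)) (b := 1)).exists_bound_of_continuousOn
    hf.continuousOn
  have hL2 : MemLp f 2 (volume.restrict (Ioc (0 : ℝ) 1)) := by
    refine MemLp.of_bound hf.aestronglyMeasurable C ?_
    filter_upwards [ae_restrict_mem measurableSet_Ioc] with x hx using hC x ⟨hx.1.le, hx.2⟩
  simpa [fc_eq_fourierCoeffOn] using hasSum_sq_fourierCoeffOn (zero_lt_one' ℝ) hL2

lemma hasSum_fc_mul_trigMonomial {f : ℝ → ℂ} (hf : Continuous f) (hp : Function.Periodic f 1)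
    (hs : Summable (fc f)) (x : ℝ) : HasSum (fun m ↦ fc f m * 𝐞 m x) (f x) := by
  let g : C(UnitAddCircle, ℂ) := ⟨hp.lift, continuous_coinduced_dom.mpr hf⟩
  have hg : fourierCoeff g = fc f := by
    ext m
    rw [fourierCoeff_eq_intervalIntegral _ _ 0, fc_eq_integral]
    simp only [zero_add, div_one, one_smul, smul_eq_mul, mul_comm (fourier _ _)]
    rfl
  have hsum := has_pointwise_sum_fourier_series_of_summable (f := g) (hg ▸ hs) (x : UnitAddCircle)
  rw [hg] at hsum
  exact hsum

lemma fc_of_hasSum {f : ℝ → ℂ} {c : ℤ → ℂ} (hc : Summable fun m ↦ ‖c m‖)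
    (hf : ∀ x, HasSum (fun m ↦ c m * 𝐞 m x) (f x)) (m : ℤ) : fc f m = c m := by
  have hterm (n : ℤ) : Continuous fun x ↦ c n * 𝐞 n x * 𝐞 (-m) x :=
    (continuous_const.mul (continuous_trigMonomial n)).mul (continuous_trigMonomial _)
  have hsum := hasSum_integral_of_summable_integral_norm (μ := volume.restrict (Ioc (0 : ℝ) 1))
    (fun n ↦ ((hterm n).intervalIntegrable 0 1).1) (by simpa using hc)
  have horth (n : ℤ) :
      ∫ x in Ioc (0 : ℝ) 1, c n * 𝐞 n x * 𝐞 (-m) x = if n = m then c m else 0 := by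
    rw [← integral_of_le zero_le_one]
    simp only [mul_assoc, ← trigMonomial_add, intervalIntegral.integral_const_mul,
      integral_trigMonomial, add_neg_eq_zero]
    split_ifs with h <;> simp [h]
  simp only [horth] at hsum
  rw [fc_eq_integral, integral_of_le zero_le_one, ← hsum.unique (hasSum_ite_eq m (c m))]
  congr 1
  ext x
  exact ((hf x).mul_right _).tsum_eq.symm

lemma fc_deriv {f f' : ℝ → ℂ} (hf : ∀ x, HasDerivAt f (f' x) x) (hf' : Continuous f')
    (hp : Function.Periodic f 1) (m : ℤ) : fc f' m = 2 * Real.pi * Complex.I * m * fc f m := by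
  have hparts := integral_mul_deriv_eq_deriv_mul (fun x _ ↦ hasDerivAt_trigMonomial (-m) x)
    (fun x _ ↦ hf x) ((continuous_const.mul (continuous_trigMonomial (-m))).intervalIntegrable 0 1)
    (hf'.intervalIntegrable 0 1)
  have hboundary : f 1 = f 0 := by simpa using hp 0
  simp only [trigMonomial_one_right, trigMonomial_zero_right, hboundary, sub_self, zero_sub,
    mul_assoc, intervalIntegral.integral_const_mul] at hparts
  simp only [fc_eq_integral, mul_comm _ (𝐞 (-m) _)]
  rw [hparts]
  push_cast
  ring

lemma integral_comp_sub_left_of_periodic {E : Type*} [NormedAddCommGroup E] [NormedSpace ℝ E]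
    {p : ℝ → E} (hp : Function.Periodic p 1) (s : ℝ) :
    ∫ t in (0 : ℝ)..1, p (s - t) = ∫ x in (0 : ℝ)..1, p x := by
  rw [intervalIntegral.integral_comp_sub_left p s]
  simpa using hp.intervalIntegral_add_eq (s - 1) 0

/-! ### Periodic Sobolev norms -/

/-- Smooth 1-periodic functions on the line, i.e. smooth functions on the circle. -/
structure SmoothPeriodic (f : ℝ → ℂ) : Prop where
  contDiff : ContDiff ℝ (⊤ : ℕ∞) f
  periodic : Function.Periodic f 1

namespace SmoothPeriodic

variable {f g : ℝ → ℂ}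

lemma continuous (hf : SmoothPeriodic f) : Continuous f := hf.contDiff.continuous

lemma hasDerivAt (hf : SmoothPeriodic f) (x : ℝ) : HasDerivAt f (deriv f x) x :=
  (hf.contDiff.differentiable (by simp) x).hasDerivAt

protected lemma deriv (hf : SmoothPeriodic f) : SmoothPeriodic (deriv f) where
  contDiff := (contDiff_infty_iff_deriv.1 hf.contDiff).2
  periodic x := by rw [← deriv_comp_add_const, funext hf.periodic]

lemma add (hf : SmoothPeriodic f) (hg : SmoothPeriodic g) : SmoothPeriodic fun x ↦ f x + g x :=
  ⟨hf.contDiff.add hg.contDiff, hf.periodic.add hg.periodic⟩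

lemma mul (hf : SmoothPeriodic f) (hg : SmoothPeriodic g) : SmoothPeriodic fun x ↦ f x * g x :=
  ⟨hf.contDiff.mul hg.contDiff, hf.periodic.mul hg.periodic⟩

lemma sub_const (hf : SmoothPeriodic f) (c : ℂ) : SmoothPeriodic fun x ↦ f x - c :=
  ⟨hf.contDiff.sub contDiff_const, fun x ↦ by simp only [hf.periodic x]⟩

lemma exists_norm_le (hf : SmoothPeriodic f) : ∃ M ≥ 0, ∀ x, ‖f x‖ ≤ M := by
  obtain ⟨M, hM⟩ := hf.periodic.isBounded_of_continuous one_ne_zero hf.continuous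
    |>.exists_norm_le
  exact ⟨M, (norm_nonneg _).trans (hM _ ⟨0, rfl⟩), fun x ↦ hM _ ⟨x, rfl⟩⟩

protected lemma fc_deriv (hf : SmoothPeriodic f) (m : ℤ) :
    fc (_root_.deriv f) m = 2 * Real.pi * Complex.I * m * fc f m :=
  fc_deriv hf.hasDerivAt hf.deriv.continuous hf.periodic m

lemma norm_fc_deriv (hf : SmoothPeriodic f) (m : ℤ) :
    ‖fc (_root_.deriv f) m‖ = 2 * Real.pi * (|(m : ℝ)| * ‖fc f m‖) := by
  simp [hf.fc_deriv, abs_of_pos Real.pi_pos, mul_assoc]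

lemma fc_add (hf : SmoothPeriodic f) (hg : SmoothPeriodic g) (m : ℤ) :
    fc (fun x ↦ f x + g x) m = fc f m + fc g m := by
  simp only [fc_eq_integral, add_mul]
  exact integral_add
    ((hf.continuous.mul (continuous_trigMonomial _)).intervalIntegrable _ _)
    ((hg.continuous.mul (continuous_trigMonomial _)).intervalIntegrable _ _)

end SmoothPeriodic

lemma smoothPeriodic_trigMonomial (m : ℤ) : SmoothPeriodic (𝐞 m) :=
  ⟨contDiff_trigMonomial m, trigMonomial_periodic m⟩

/-- The weighted Fourier coefficients whose `ℓ²` norm is the periodic Sobolev norm of integer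
order `k`; the weight `max 1 |m|` treats the zero mode uniformly with the others. -/
noncomputable def sobCoeff (k : ℕ) (u : ℝ → ℂ) (m : ℤ) : ℝ := max 1 |(m : ℝ)| ^ k * ‖fc u m‖

section SobolevCoefficients

variable {u v : ℝ → ℂ} {k : ℕ} {m : ℤ}

lemma sobCoeff_nonneg : 0 ≤ sobCoeff k u m := by unfold sobCoeff; positivity

lemma sobCoeff_zero : sobCoeff 0 u m = ‖fc u m‖ := by simp [sobCoeff]

lemma sobCoeff_le_sobCoeff {l : ℕ} (hkl : k ≤ l) : sobCoeff k u m ≤ sobCoeff l u m := by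
  unfold sobCoeff
  gcongr
  exact le_max_left _ _

lemma abs_pow_mul_norm_fc_le_sobCoeff : |(m : ℝ)| ^ k * ‖fc u m‖ ≤ sobCoeff k u m := by
  unfold sobCoeff
  gcongr
  exact le_max_right _ _

lemma sobCoeff_add_le (hu : SmoothPeriodic u) (hv : SmoothPeriodic v) :
    sobCoeff k (fun x ↦ u x + v x) m ≤ sobCoeff k u m + sobCoeff k v m := by
  rw [sobCoeff, hu.fc_add hv, sobCoeff, sobCoeff, ← mul_add]
  gcongr
  exact norm_add_le _ _

lemma sobCoeff_deriv_le (hu : SmoothPeriodic u) :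
    sobCoeff k (deriv u) m ≤ 2 * Real.pi * sobCoeff (k + 1) u m := by
  calc sobCoeff k (deriv u) m
      = 2 * Real.pi * (max 1 |(m : ℝ)| ^ k * |(m : ℝ)| * ‖fc u m‖) := by
        rw [sobCoeff, hu.norm_fc_deriv]; ring
    _ ≤ 2 * Real.pi * sobCoeff (k + 1) u m := by
        rw [sobCoeff, pow_succ]; gcongr; exact le_max_right _ _

lemma sobCoeff_succ_le (hu : SmoothPeriodic u) :
    sobCoeff (k + 1) u m ≤ sobCoeff k u m + sobCoeff k (deriv u) m := by
  have hmax : max 1 |(m : ℝ)| ≤ 1 + |(m : ℝ)| := max_le (by simp) (by simp)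
  have hpi : |(m : ℝ)| * ‖fc u m‖ ≤ ‖fc (deriv u) m‖ := by
    rw [hu.norm_fc_deriv]
    exact le_mul_of_one_le_left (by positivity) (by linarith [Real.pi_gt_three])
  calc sobCoeff (k + 1) u m = max 1 |(m : ℝ)| ^ k * (max 1 |(m : ℝ)| * ‖fc u m‖) := by
        rw [sobCoeff]; ring
    _ ≤ max 1 |(m : ℝ)| ^ k * (‖fc u m‖ + ‖fc (deriv u) m‖) := by
        gcongr
        linarith [mul_le_mul_of_nonneg_right hmax (norm_nonneg (fc u m))]
    _ = sobCoeff k u m + sobCoeff k (deriv u) m := mul_add _ _ _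

lemma SmoothPeriodic.summable_sobCoeff_sq (hu : SmoothPeriodic u) :
    Summable fun m ↦ sobCoeff k u m ^ 2 := by
  induction k generalizing u with
  | zero => simpa only [sobCoeff_zero] using (hasSum_sq_norm_fc hu.continuous).summable
  | succ k ih =>
    refine .of_nonneg_of_le (fun _ ↦ sq_nonneg _) (fun m ↦ ?_)
      (((ih hu).add (ih hu.deriv)).mul_left 2)
    calc sobCoeff (k + 1) u m ^ 2 ≤ (sobCoeff k u m + sobCoeff k (deriv u) m) ^ 2 :=
          pow_le_pow_left₀ sobCoeff_nonneg (sobCoeff_succ_le hu) 2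
      _ ≤ 2 * (sobCoeff k u m ^ 2 + sobCoeff k (deriv u) m ^ 2) := add_sq_le

lemma SmoothPeriodic.sobNorm_eq (hu : SmoothPeriodic u) :
    sobNorm k u = √(∑' m, sobCoeff k u m ^ 2) := by
  rw [sobNorm, hu.summable_sobCoeff_sq.tsum_eq_add_tsum_ite 0]
  congr! 4 with m
  · simp [sobCoeff]
  · split_ifs with hm
    · rfl
    · have : (1 : ℝ) ≤ |(m : ℝ)| := by exact_mod_cast Int.one_le_abs hm
      rw [sobCoeff, max_eq_right this, mul_pow, ← pow_mul, mul_comm k]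
      exact_mod_cast rfl

end SobolevCoefficients

lemma sobNorm_nonneg (r : ℝ) (u : ℝ → ℂ) : 0 ≤ sobNorm r u := Real.sqrt_nonneg _

/-- Minkowski's inequality in `ℓ²`. -/
lemma sobNorm_le_add_of_sobCoeff_le {u v w : ℝ → ℂ} (hu : SmoothPeriodic u)
    (hv : SmoothPeriodic v) (hw : SmoothPeriodic w) {k i j : ℕ} {a b : ℝ} (ha : 0 ≤ a) (hb : 0 ≤ b)
    (h : ∀ m, sobCoeff k u m ≤ a * sobCoeff i v m + b * sobCoeff j w m) :
    sobNorm k u ≤ a * sobNorm i v + b * sobNorm j w := by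
  have hscale {l : ℕ} {z : ℝ → ℂ} (hz : SmoothPeriodic z) {c : ℝ} (hc : 0 ≤ c) :
      √(∑' m, (c * sobCoeff l z m) ^ 2) = c * sobNorm l z := by
    simp_rw [mul_pow, tsum_mul_left, hz.sobNorm_eq]
    rw [Real.sqrt_mul (sq_nonneg c), Real.sqrt_sq hc]
  have hnonneg {l : ℕ} {z : ℝ → ℂ} {c : ℝ} (hc : 0 ≤ c) (m : ℤ) : 0 ≤ c * sobCoeff l z m :=
    mul_nonneg hc sobCoeff_nonneg
  have hsq {l : ℕ} {z : ℝ → ℂ} (hz : SmoothPeriodic z) (c : ℝ) :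
      Summable fun m ↦ (c * sobCoeff l z m) ^ 2 := by
    simpa only [mul_pow] using hz.summable_sobCoeff_sq.mul_left (c ^ 2)
  have hLp := Real.Lp_add_le_tsum_of_nonneg one_le_two (hnonneg (l := i) (z := v) ha)
    (hnonneg (l := j) (z := w) hb) (by exact_mod_cast hsq hv a) (by exact_mod_cast hsq hw b)
  simp only [Real.rpow_two, ← Real.sqrt_eq_rpow, hscale hv ha, hscale hw hb] at hLp
  rw [hu.sobNorm_eq]
  refine (Real.sqrt_le_sqrt ?_).trans hLp.2
  exact hu.summable_sobCoeff_sq.tsum_le_tsum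
    (fun m ↦ pow_le_pow_left₀ sobCoeff_nonneg (h m) 2) hLp.1

section SobolevNorm

variable {u v : ℝ → ℂ}

lemma sobNorm_le_of_sobCoeff_le (hu : SmoothPeriodic u) (hv : SmoothPeriodic v) {k i : ℕ} {a : ℝ}
    (ha : 0 ≤ a) (h : ∀ m, sobCoeff k u m ≤ a * sobCoeff i v m) :
    sobNorm k u ≤ a * sobNorm i v := by
  simpa using sobNorm_le_add_of_sobCoeff_le hu hv hv (j := i) ha le_rfl (by simpa using h)

lemma sobNorm_mono (hu : SmoothPeriodic u) {k l : ℕ} (hkl : k ≤ l) : sobNorm k u ≤ sobNorm l u := by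
  simpa using sobNorm_le_of_sobCoeff_le hu hu zero_le_one
    fun m ↦ by simpa using sobCoeff_le_sobCoeff hkl

lemma sobNorm_deriv_le (hu : SmoothPeriodic u) (k : ℕ) :
    sobNorm k (deriv u) ≤ 2 * Real.pi * sobNorm (k + 1 : ℕ) u :=
  sobNorm_le_of_sobCoeff_le hu.deriv hu Real.two_pi_pos.le fun _ ↦ sobCoeff_deriv_le hu

lemma sobNorm_succ_le (hu : SmoothPeriodic u) (k : ℕ) :
    sobNorm (k + 1 : ℕ) u ≤ sobNorm k u + sobNorm k (deriv u) := by
  simpa using sobNorm_le_add_of_sobCoeff_le (k := k + 1) (i := k) (j := k) hu hu hu.deriv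
    zero_le_one zero_le_one fun m ↦ by simpa using sobCoeff_succ_le hu

lemma sobNorm_add_le (hu : SmoothPeriodic u) (hv : SmoothPeriodic v) (k : ℕ) :
    sobNorm k (fun x ↦ u x + v x) ≤ sobNorm k u + sobNorm k v := by
  simpa using sobNorm_le_add_of_sobCoeff_le (hu.add hv) hu hv zero_le_one zero_le_one
    fun m ↦ by simpa using sobCoeff_add_le hu hv

lemma sobNorm_zero_eq_sqrt_integral (hu : SmoothPeriodic u) :
    sobNorm (0 : ℕ) u = √(∫ x in (0 : ℝ)..1, ‖u x‖ ^ 2) := by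
  rw [hu.sobNorm_eq]
  simp only [sobCoeff_zero, (hasSum_sq_norm_fc hu.continuous).tsum_eq]

lemma sobNorm_zero_sq (hu : SmoothPeriodic u) :
    sobNorm (0 : ℕ) u ^ 2 = ∫ x in (0 : ℝ)..1, ‖u x‖ ^ 2 := by
  rw [sobNorm_zero_eq_sqrt_integral hu, Real.sq_sqrt]
  exact integral_nonneg zero_le_one fun _ _ ↦ sq_nonneg _

lemma sobNorm_zero_le_of_norm_le_mul (hu : SmoothPeriodic u) (hv : SmoothPeriodic v) {M : ℝ}
    (hM : 0 ≤ M) (h : ∀ x, ‖u x‖ ≤ M * ‖v x‖) : sobNorm (0 : ℕ) u ≤ M * sobNorm (0 : ℕ) v := by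
  refine abs_le_of_sq_le_sq' ?_ (mul_nonneg hM (sobNorm_nonneg _ _)) |>.2
  rw [mul_pow, sobNorm_zero_sq hu, sobNorm_zero_sq hv, ← intervalIntegral.integral_const_mul]
  refine integral_mono_on zero_le_one ((hu.continuous.norm.pow 2).intervalIntegrable _ _)
    ((continuous_const.mul (hv.continuous.norm.pow 2)).intervalIntegrable _ _) fun x _ ↦ ?_
  rw [← mul_pow]
  gcongr
  exact h x

lemma sobNorm_zero_le_of_norm_le (hu : SmoothPeriodic u) {M : ℝ} (h : ∀ x, ‖u x‖ ≤ M) :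
    sobNorm (0 : ℕ) u ≤ M := by
  have hM : 0 ≤ M := (norm_nonneg _).trans (h 0)
  refine abs_le_of_sq_le_sq' ?_ hM |>.2
  rw [sobNorm_zero_sq hu]
  calc ∫ x in (0 : ℝ)..1, ‖u x‖ ^ 2 ≤ ∫ _ in (0 : ℝ)..1, M ^ 2 := by
        refine integral_mono_on zero_le_one ((hu.continuous.norm.pow 2).intervalIntegrable _ _)
          intervalIntegrable_const fun x _ ↦ ?_
        gcongr
        exact h x
    _ = M ^ 2 := by simp

end SobolevNorm

lemma exists_tsum_sobCoeff_le : ∃ S ≥ 0, ∀ u, SmoothPeriodic u → ∀ k : ℕ,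
    Summable (sobCoeff k u) ∧ ∑' m, sobCoeff k u m ≤ S * sobNorm (k + 1 : ℕ) u := by
  have hsq : Summable fun m : ℤ ↦ (max 1 |(m : ℝ)|)⁻¹ ^ 2 := by
    refine .of_norm_bounded_eventually (Real.summable_one_div_int_pow.2 one_lt_two) ?_
    filter_upwards [(Set.finite_singleton (0 : ℤ)).compl_mem_cofinite] with m hm
    have : (1 : ℝ) ≤ |(m : ℝ)| := by exact_mod_cast Int.one_le_abs hm
    simp [max_eq_right this]
  refine ⟨√(∑' m : ℤ, (max 1 |(m : ℝ)|)⁻¹ ^ 2), Real.sqrt_nonneg _, fun u hu k ↦ ?_⟩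
  have hcoeff (m : ℤ) : (max 1 |(m : ℝ)|)⁻¹ * sobCoeff (k + 1) u m = sobCoeff k u m := by
    have : max 1 |(m : ℝ)| ≠ 0 := by positivity
    rw [sobCoeff, sobCoeff, pow_succ', mul_assoc, inv_mul_cancel_left₀ this]
  have hinner := Real.summable_and_inner_le_Lp_mul_Lq_tsum_of_nonneg Real.HolderConjugate.two_two
    (f := fun m : ℤ ↦ (max 1 |(m : ℝ)|)⁻¹) (g := sobCoeff (k + 1) u) (fun _ ↦ by positivity)
    (fun _ ↦ sobCoeff_nonneg) (by exact_mod_cast hsq) (by exact_mod_cast hu.summable_sobCoeff_sq)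
  simpa only [hcoeff, Real.rpow_two, ← Real.sqrt_eq_rpow, ← hu.sobNorm_eq] using hinner

lemma SmoothPeriodic.summable_sobCoeff {u : ℝ → ℂ} (hu : SmoothPeriodic u) (k : ℕ) :
    Summable (sobCoeff k u) := by
  obtain ⟨_, -, hS⟩ := exists_tsum_sobCoeff_le
  exact (hS u hu k).1

lemma SmoothPeriodic.hasSum_fc {u : ℝ → ℂ} (hu : SmoothPeriodic u) (x : ℝ) :
    HasSum (fun m ↦ fc u m * 𝐞 m x) (u x) :=
  hasSum_fc_mul_trigMonomial hu.continuous hu.periodic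
    (.of_norm ((hu.summable_sobCoeff 0).congr fun _ ↦ sobCoeff_zero)) x

lemma SmoothPeriodic.norm_le_tsum_sobCoeff {u : ℝ → ℂ} (hu : SmoothPeriodic u) (x : ℝ) :
    ‖u x‖ ≤ ∑' m, sobCoeff 0 u m := by
  rw [← (hu.hasSum_fc x).tsum_eq]
  exact tsum_of_norm_bounded (hu.summable_sobCoeff 0).hasSum fun m ↦ by simp [sobCoeff_zero]

/-- A one-dimensional Sobolev embedding. -/
lemma exists_norm_le_mul_sobNorm : ∃ S ≥ 0, ∀ u, SmoothPeriodic u → ∀ x,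
    ‖u x‖ ≤ S * sobNorm (1 : ℕ) u := by
  obtain ⟨S, hS0, hS⟩ := exists_tsum_sobCoeff_le
  exact ⟨S, hS0, fun u hu x ↦ (hu.norm_le_tsum_sobCoeff x).trans (hS u hu 0).2⟩

/-! ### The periodic logarithm -/

/-- The 1-periodic logarithmic kernel `x ↦ log (4 sin² (πx))`, normalised to have mean zero. Its
value at the integers is the junk value `0`. -/
noncomputable def periodicLog (x : ℝ) : ℝ := Real.log (4 * Real.sin (Real.pi * x) ^ 2)

section PeriodicLog

variable {x : ℝ}

lemma periodicLog_eq_two_mul_log (x : ℝ) :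
    periodicLog x = 2 * Real.log (2 * Real.sin (Real.pi * x)) := by
  rw [periodicLog, show 4 * Real.sin (Real.pi * x) ^ 2 = (2 * Real.sin (Real.pi * x)) ^ 2 by ring,
    Real.log_pow, Nat.cast_ofNat]

lemma abs_sin_pi_mul_add_int (x : ℝ) (k : ℤ) :
    |Real.sin (Real.pi * (x + k))| = |Real.sin (Real.pi * x)| := by
  rw [mul_add, mul_comm Real.pi k, Real.sin_add_int_mul_pi, abs_mul, abs_neg_one_zpow, one_mul]

lemma two_mul_abs_sub_round_le_abs_sin (x : ℝ) :
    2 * |x - round x| ≤ |Real.sin (Real.pi * x)| := by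
  have hpi := Real.pi_pos
  have hhalf : |Real.pi * (x - round x)| ≤ Real.pi / 2 := by
    rw [abs_mul, abs_of_pos hpi]
    nlinarith [abs_sub_round x]
  calc 2 * |x - round x| = 2 / Real.pi * |Real.pi * (x - round x)| := by
        rw [abs_mul, abs_of_pos hpi]; field_simp
    _ ≤ |Real.sin (Real.pi * (x - round x))| := Real.mul_abs_le_abs_sin hhalf
    _ = |Real.sin (Real.pi * x)| := by
        simpa using (abs_sin_pi_mul_add_int (x - round x) (round x)).symm

lemma sin_pi_mul_pos (hx : x ∈ Ioo 0 1) : 0 < Real.sin (Real.pi * x) :=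
  Real.sin_pos_of_pos_of_lt_pi (mul_pos Real.pi_pos hx.1)
    (mul_lt_of_lt_one_right Real.pi_pos hx.2)

lemma sin_pi_mul_ne_zero_of_forall_ne_int (hx : ∀ k : ℤ, x ≠ k) : Real.sin (Real.pi * x) ≠ 0 := by
  contrapose! hx
  refine ⟨round x, sub_eq_zero.1 (abs_nonpos_iff.1 ?_)⟩
  linarith [two_mul_abs_sub_round_le_abs_sin x, abs_eq_zero.2 hx]

lemma periodicLog_periodic : Function.Periodic periodicLog 1 := fun x ↦ by
  have h := abs_sin_pi_mul_add_int x 1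
  rw [Int.cast_one] at h
  rw [periodicLog, periodicLog, ← sq_abs, h, sq_abs]

lemma periodicLog_one_sub (x : ℝ) : periodicLog (1 - x) = periodicLog x := by
  rw [periodicLog, periodicLog, mul_sub, mul_one, Real.sin_pi_sub]

lemma measurable_periodicLog : Measurable periodicLog := by
  unfold periodicLog
  fun_prop

lemma hasDerivAt_periodicLog (hx : Real.sin (Real.pi * x) ≠ 0) :
    HasDerivAt periodicLog (2 * Real.pi * Real.cot (Real.pi * x)) x := by
  have h := ((((hasDerivAt_id x).const_mul Real.pi).sin.const_mul 2).log
    (mul_ne_zero two_ne_zero hx)).const_mul 2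
  rw [funext periodicLog_eq_two_mul_log]
  convert! h using 1
  rw [Real.cot_eq_cos_div_sin]
  simp only [id_eq]
  field_simp

lemma sq_log_sin_pi_mul_le (hx : x ∈ Ioo 0 1) :
    Real.log (Real.sin (Real.pi * x)) ^ 2
      ≤ 16 * (x ^ (-(1 / 2) : ℝ) + (1 - x) ^ (-(1 / 2) : ℝ)) := by
  set y := Real.sin (Real.pi * x)
  have hy : 0 < y := sin_pi_mul_pos hx
  have hpow : Real.log y ^ 2 ≤ 16 * y ^ (-(1 / 2) : ℝ) := by
    have hlog := Real.abs_log_mul_self_rpow_lt y (1 / 4) hy (Real.sin_le_one _) (by norm_num)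
    have hsq : (y ^ (1 / 4 : ℝ)) ^ 2 * y ^ (-(1 / 2) : ℝ) = 1 := by
      rw [← Real.rpow_natCast, ← Real.rpow_mul hy.le, ← Real.rpow_add hy]; norm_num
    calc Real.log y ^ 2 = |Real.log y * y ^ (1 / 4 : ℝ)| ^ 2 * y ^ (-(1 / 2) : ℝ) := by
          rw [sq_abs, mul_pow, mul_assoc, hsq, mul_one]
      _ ≤ (1 / (1 / 4)) ^ 2 * y ^ (-(1 / 2) : ℝ) := by gcongr
      _ = 16 * y ^ (-(1 / 2) : ℝ) := by norm_num
  have hmin : min x (1 - x) ≤ y := by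
    have h := two_mul_abs_sub_round_le_abs_sin x
    rw [abs_sub_round_eq_min, Int.fract_eq_self.2 ⟨hx.1.le, hx.2⟩, abs_of_pos hy] at h
    linarith [le_min hx.1.le (sub_nonneg.2 hx.2.le)]
  have hx' : 0 < 1 - x := sub_pos.2 hx.2
  have hrpow {z : ℝ} (hz : 0 < z) (hzy : z ≤ y) : y ^ (-(1 / 2) : ℝ) ≤ z ^ (-(1 / 2) : ℝ) :=
    Real.rpow_le_rpow_of_nonpos hz hzy (by norm_num)
  refine hpow.trans (mul_le_mul_of_nonneg_left ?_ (by norm_num))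
  rcases min_le_iff.1 hmin with h | h
  · exact (hrpow hx.1 h).trans (le_add_of_nonneg_right (Real.rpow_nonneg hx'.le _))
  · exact (hrpow hx' h).trans (le_add_of_nonneg_left (Real.rpow_nonneg hx.1.le _))

lemma ae_restrict_mem_Ioo (a b : ℝ) : ∀ᵐ x ∂volume.restrict (Ioc a b), x ∈ Ioo a b := by
  rw [← Measure.restrict_congr_set Ioo_ae_eq_Ioc]
  exact ae_restrict_mem measurableSet_Ioo

lemma memLp_log_sin_pi_mul :
    MemLp (fun x ↦ Real.log (Real.sin (Real.pi * x))) 2 (volume.restrict (Ioc 0 1)) := by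
  have hmeas : Measurable fun x ↦ Real.log (Real.sin (Real.pi * x)) := by fun_prop
  have hpow : IntervalIntegrable (fun x : ℝ ↦ x ^ (-(1 / 2) : ℝ)) volume 0 1 :=
    intervalIntegrable_rpow' (by norm_num)
  have hpow' : IntervalIntegrable (fun x : ℝ ↦ (1 - x) ^ (-(1 / 2) : ℝ)) volume 0 1 := by
    simpa using (hpow.comp_sub_left 1).symm
  rw [memLp_two_iff_integrable_sq hmeas.aestronglyMeasurable]
  refine ((hpow.add hpow').const_mul 16).1.mono' (hmeas.pow_const 2).aestronglyMeasurable ?_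
  filter_upwards [ae_restrict_mem_Ioo 0 1] with x hx
  rw [Real.norm_eq_abs, abs_of_nonneg (sq_nonneg _)]
  exact sq_log_sin_pi_mul_le hx

lemma periodicLog_eq_add (hx : Real.sin (Real.pi * x) ≠ 0) :
    periodicLog x = Real.log 4 + 2 * Real.log (Real.sin (Real.pi * x)) := by
  rw [periodicLog, Real.log_mul four_ne_zero (pow_ne_zero 2 hx), Real.log_pow, Nat.cast_ofNat]

lemma memLp_periodicLog : MemLp periodicLog 2 (volume.restrict (Ioc 0 1)) := by
  refine ((memLp_const (Real.log 4)).add (memLp_log_sin_pi_mul.const_mul 2)).ae_eq ?_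
  filter_upwards [ae_restrict_mem_Ioo 0 1] with x hx
  exact (periodicLog_eq_add (sin_pi_mul_pos hx).ne').symm

lemma intervalIntegrable_periodicLog :
    IntervalIntegrable (fun x ↦ (periodicLog x : ℂ)) volume 0 1 := by
  rw [intervalIntegrable_iff_integrableOn_Ioc_of_le zero_le_one]
  exact (memLp_periodicLog.integrable one_le_two).ofReal

lemma integral_periodicLog : ∫ x in (0 : ℝ)..1, (periodicLog x : ℂ) = 0 := by
  have hlog4 : Real.log 4 = 2 * Real.log 2 := by
    rw [show (4 : ℝ) = 2 ^ 2 by norm_num, Real.log_pow, Nat.cast_ofNat]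
  have hint : IntervalIntegrable (fun x ↦ Real.log (Real.sin (Real.pi * x))) volume 0 1 :=
    (intervalIntegrable_iff_integrableOn_Ioc_of_le zero_le_one).2
      (memLp_log_sin_pi_mul.integrable one_le_two)
  rw [intervalIntegral.integral_ofReal, Complex.ofReal_eq_zero, integral_of_le zero_le_one,
    setIntegral_congr_ae measurableSet_Ioc
      (g := fun x ↦ Real.log 4 + 2 * Real.log (Real.sin (Real.pi * x))),
    ← integral_of_le zero_le_one, integral_add (by simp) (hint.const_mul 2),
    intervalIntegral.integral_const_mul, intervalIntegral.integral_comp_mul_left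
      (fun x ↦ Real.log (Real.sin x)) Real.pi_ne_zero, mul_zero, mul_one,
    integral_log_sin_zero_pi, intervalIntegral.integral_const, hlog4]
  · simp only [smul_eq_mul]
    field_simp
    ring
  · filter_upwards [compl_mem_ae_iff.2 (measure_singleton (1 : ℝ))] with x hx1 hx
    exact periodicLog_eq_add (sin_pi_mul_pos ⟨hx.1, lt_of_le_of_ne hx.2 hx1⟩).ne'

lemma intervalIntegrable_periodicLog_mul {f : ℝ → ℂ} (hf : Continuous f) :
    IntervalIntegrable (fun x ↦ (periodicLog x : ℂ) * f x) volume 0 1 :=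
  intervalIntegrable_periodicLog.mul_continuousOn hf.continuousOn

/-- Cauchy–Schwarz against the periodic logarithm. -/
lemma exists_norm_integral_periodicLog_mul_le : ∃ L ≥ 0, ∀ f, Continuous f →
    ‖∫ x in (0 : ℝ)..1, (periodicLog x : ℂ) * f x‖ ≤ L * √(∫ x in (0 : ℝ)..1, ‖f x‖ ^ 2) := by
  refine ⟨√(∫ x in (0 : ℝ)..1, |periodicLog x| ^ 2), Real.sqrt_nonneg _, fun f hf ↦ ?_⟩
  obtain ⟨M, hM⟩ := (isCompact_Icc (a := (0 : ℝ)) (b := 1)).exists_bound_of_continuousOn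
    hf.continuousOn
  have hL2 : MemLp (fun x ↦ ‖f x‖) (ENNReal.ofReal 2) (volume.restrict (Ioc (0 : ℝ) 1)) := by
    refine MemLp.of_bound hf.norm.aestronglyMeasurable M ?_
    filter_upwards [ae_restrict_mem measurableSet_Ioc] with x hx
    simpa using hM x ⟨hx.1.le, hx.2⟩
  have hlog : MemLp (fun x ↦ |periodicLog x|) (ENNReal.ofReal 2) (volume.restrict (Ioc 0 1)) := by
    rw [ENNReal.ofReal_ofNat]
    exact memLp_periodicLog.abs
  have hHolder := integral_mul_le_Lp_mul_Lq_of_nonneg Real.HolderConjugate.two_two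
    (Eventually.of_forall fun _ ↦ abs_nonneg _) (Eventually.of_forall fun _ ↦ norm_nonneg _)
    hlog hL2
  refine (intervalIntegral.norm_integral_le_integral_norm zero_le_one).trans ?_
  simpa only [norm_mul, Complex.norm_real, Real.norm_eq_abs, Real.rpow_two, ← Real.sqrt_eq_rpow,
    ← integral_of_le (zero_le_one' ℝ)] using hHolder

end PeriodicLog

/-! ### Cancelling the logarithmic singularity -/

lemma continuous_periodicLog_mul {g : ℝ → ℂ} {C : ℝ} (hg : Continuous g)
    (hb : ∀ x, ‖g x‖ ≤ C * |Real.sin (Real.pi * x)|) :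
    Continuous fun x ↦ (periodicLog x : ℂ) * g x := by
  refine continuous_iff_continuousAt.2 fun x ↦ ?_
  by_cases hx : Real.sin (Real.pi * x) = 0
  · have hlog : Continuous fun y ↦ C * |2 * Real.sin (Real.pi * y)
        * Real.log (2 * Real.sin (Real.pi * y))| :=
      continuous_const.mul (Real.continuous_mul_log.comp (by fun_prop)).abs
    have hgx : g x = 0 := by simpa [hx] using hb x
    have hlim := hlog.tendsto x
    simp only [hx, mul_zero, zero_mul, abs_zero] at hlim
    rw [ContinuousAt, hgx, mul_zero]
    refine squeeze_zero_norm (fun y ↦ ?_) hlim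
    rw [norm_mul, Complex.norm_real, Real.norm_eq_abs, periodicLog_eq_two_mul_log]
    calc |2 * Real.log (2 * Real.sin (Real.pi * y))| * ‖g y‖
        ≤ |2 * Real.log (2 * Real.sin (Real.pi * y))| * (C * |Real.sin (Real.pi * y)|) := by
          gcongr; exact hb y
      _ = C * |2 * Real.sin (Real.pi * y) * Real.log (2 * Real.sin (Real.pi * y))| := by
          simp only [abs_mul]; ring
  · have hlog : ContinuousAt periodicLog x := (hasDerivAt_periodicLog hx).continuousAt
    exact (Complex.continuous_ofReal.continuousAt.comp hlog).mul hg.continuousAt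

section VanishAtZero

variable {F : ℝ → ℂ} (hF : SmoothPeriodic F) (hF0 : F 0 = 0)
include hF hF0

lemma SmoothPeriodic.norm_le_mul_abs_sin {L : ℝ} (hL : ∀ x, ‖deriv F x‖ ≤ L) (x : ℝ) :
    ‖F x‖ ≤ L / 2 * |Real.sin (Real.pi * x)| := by
  have hlip := Convex.norm_image_sub_le_of_norm_deriv_le
    (fun y _ ↦ (hF.hasDerivAt y).differentiableAt) (fun y _ ↦ hL y) convex_univ (mem_univ 0)
    (mem_univ (x - round x))
  have hshift : F (x - round x) = F x := by simpa using hF.periodic.sub_int_mul_eq (round x)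
  rw [hF0, hshift, sub_zero, sub_zero, Real.norm_eq_abs] at hlip
  nlinarith [two_mul_abs_sub_round_le_abs_sin x, (norm_nonneg _).trans (hL 0)]

lemma SmoothPeriodic.norm_cot_mul_le {L : ℝ} (hL : ∀ x, ‖deriv F x‖ ≤ L) (x : ℝ) :
    ‖(Real.cot (Real.pi * x) : ℂ) * F x‖ ≤ L / 2 := by
  have hL0 : 0 ≤ L := (norm_nonneg _).trans (hL 0)
  rw [norm_mul, Complex.norm_real, Real.norm_eq_abs, Real.cot_eq_cos_div_sin, abs_div]
  rcases eq_or_ne (Real.sin (Real.pi * x)) 0 with hx | hx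
  · simp only [hx, abs_zero, div_zero, zero_mul]; linarith
  · have hx' : 0 < |Real.sin (Real.pi * x)| := abs_pos.2 hx
    rw [div_mul_eq_mul_div, div_le_iff₀ hx']
    exact (mul_le_of_le_one_left (norm_nonneg _) (Real.abs_cos_le_one _)).trans
      (hF.norm_le_mul_abs_sin hF0 hL x)

lemma SmoothPeriodic.intervalIntegrable_cot_mul :
    IntervalIntegrable (fun x ↦ (Real.cot (Real.pi * x) : ℂ) * F x) volume 0 1 := by
  obtain ⟨L, -, hL⟩ := hF.deriv.exists_norm_le
  have hmeas : Measurable fun x ↦ (Real.cot (Real.pi * x) : ℂ) * F x := by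
    simp only [Real.cot_eq_cos_div_sin]
    have := hF.continuous.measurable
    fun_prop
  rw [intervalIntegrable_iff_integrableOn_Ioc_of_le zero_le_one]
  exact Integrable.of_bound hmeas.aestronglyMeasurable (L / 2)
    (Eventually.of_forall fun x ↦ hF.norm_cot_mul_le hF0 hL x)

/-- The boundary terms vanish because `F` kills the singularities of the logarithm at `0` and
`1`. -/
lemma SmoothPeriodic.integral_periodicLog_mul_deriv :
    ∫ x in (0 : ℝ)..1, (periodicLog x : ℂ) * deriv F x
      = -(2 * Real.pi * ∫ x in (0 : ℝ)..1, (Real.cot (Real.pi * x) : ℂ) * F x) := by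
  obtain ⟨L, -, hL⟩ := hF.deriv.exists_norm_le
  have hcont := continuous_periodicLog_mul hF.continuous (hF.norm_le_mul_abs_sin hF0 hL)
  have hderiv (x : ℝ) (hx : x ∈ Ioo (0 : ℝ) 1) :
      HasDerivAt (fun x ↦ (periodicLog x : ℂ) * F x) (2 * Real.pi
        * ((Real.cot (Real.pi * x) : ℂ) * F x) + (periodicLog x : ℂ) * deriv F x) x := by
    have h := (hasDerivAt_periodicLog (sin_pi_mul_pos hx).ne').ofReal_comp.mul (hF.hasDerivAt x)
    convert! h using 1
    push_cast
    ring
  have hcot := (hF.intervalIntegrable_cot_mul hF0).const_mul (2 * Real.pi : ℂ)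
  have hlog := intervalIntegrable_periodicLog_mul hF.deriv.continuous
  have hFTC := integral_eq_sub_of_hasDerivAt_of_le zero_le_one hcont.continuousOn hderiv
    (hcot.add hlog)
  have hF1 : F 1 = 0 := by simpa [hF0] using hF.periodic 0
  rw [integral_add hcot hlog, hF0, hF1, mul_zero, mul_zero, sub_zero,
    intervalIntegral.integral_const_mul] at hFTC
  exact eq_neg_of_add_eq_zero_right hFTC

end VanishAtZero

/-! ### Fourier coefficients of the periodic logarithm -/

lemma trigMonomial_one_eq_sq (x : ℝ) :
    𝐞 1 x = (Real.cos (Real.pi * x) + Real.sin (Real.pi * x) * Complex.I) ^ 2 := by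
  rw [Complex.ofReal_cos, Complex.ofReal_sin, ← Complex.exp_mul_I, ← Complex.exp_nat_mul,
    trigMonomial_eq_exp]
  push_cast
  ring_nf

lemma sin_sq_add_cos_sq_ofReal (θ : ℝ) :
    ((Real.sin θ : ℝ) : ℂ) ^ 2 + ((Real.cos θ : ℝ) : ℂ) ^ 2 = 1 := by
  exact_mod_cast Real.sin_sq_add_cos_sq θ

lemma trigMonomial_one_sub_one (x : ℝ) :
    𝐞 1 x - 1 = 2 * Complex.I * Real.sin (Real.pi * x)
      * (Real.cos (Real.pi * x) + Real.sin (Real.pi * x) * Complex.I) := by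
  rw [trigMonomial_one_eq_sq]
  linear_combination sin_sq_add_cos_sq_ofReal (Real.pi * x)
    - (Real.sin (Real.pi * x) : ℂ) ^ 2 * Complex.I_sq

lemma norm_trigMonomial_one_sub_one (x : ℝ) : ‖𝐞 1 x - 1‖ = 2 * |Real.sin (Real.pi * x)| := by
  have hunit : ‖(Real.cos (Real.pi * x) + Real.sin (Real.pi * x) * Complex.I : ℂ)‖ = 1 := by
    rw [Complex.ofReal_cos, Complex.ofReal_sin, ← Complex.exp_mul_I, Complex.norm_exp_ofReal_mul_I]
  rw [trigMonomial_one_sub_one, norm_mul, hunit, norm_mul, norm_mul, Complex.norm_real,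
    Complex.norm_I, Complex.norm_two, mul_one, mul_one, Real.norm_eq_abs]

lemma periodicLog_eq_two_mul_log_norm (x : ℝ) : periodicLog x = 2 * Real.log ‖𝐞 1 x - 1‖ := by
  rw [norm_trigMonomial_one_sub_one, periodicLog_eq_two_mul_log, ← abs_two, ← abs_mul, Real.log_abs,
    abs_two]

lemma cot_mul_trigMonomial_one_sub_one {x : ℝ} (hx : Real.sin (Real.pi * x) ≠ 0) :
    (Real.cot (Real.pi * x) : ℂ) * (𝐞 1 x - 1) = Complex.I * (𝐞 1 x + 1) := by
  have hx' : (Real.sin (Real.pi * x) : ℂ) ≠ 0 := Complex.ofReal_ne_zero.2 hx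
  rw [trigMonomial_one_sub_one, trigMonomial_one_eq_sq, Real.cot_eq_cos_div_sin, Complex.ofReal_div]
  field_simp
  linear_combination sin_sq_add_cos_sq_ofReal (Real.pi * x)
    - (Real.sin (Real.pi * x) : ℂ) ^ 2 * Complex.I_sq

lemma cot_mul_trigMonomial_sub_one {x : ℝ} (hx : Real.sin (Real.pi * x) ≠ 0) (n : ℕ) :
    (Real.cot (Real.pi * x) : ℂ) * (𝐞 n x - 1)
      = ∑ k ∈ Finset.range n, Complex.I * (𝐞 (k + 1) x + 𝐞 k x) := by
  have hpow (k : ℕ) : 𝐞 k x = 𝐞 1 x ^ k := by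
    rw [← trigMonomial_natCast_mul_right, trigMonomial_eq_exp, trigMonomial_eq_exp]
    push_cast
    ring_nf
  rw [hpow, ← geom_sum_mul, mul_left_comm, cot_mul_trigMonomial_one_sub_one hx, Finset.sum_mul]
  refine Finset.sum_congr rfl fun k _ ↦ ?_
  rw [trigMonomial_add, hpow]
  ring

lemma integral_cot_mul_trigMonomial_sub_one {n : ℕ} (hn : n ≠ 0) :
    ∫ x in (0 : ℝ)..1, (Real.cot (Real.pi * x) : ℂ) * (𝐞 n x - 1) = Complex.I := by
  have hcont (m : ℤ) : IntervalIntegrable (𝐞 m) volume 0 1 :=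
    (continuous_trigMonomial m).intervalIntegrable _ _
  have hterm (k : ℕ) : IntervalIntegrable (fun x ↦ Complex.I * (𝐞 (k + 1) x + 𝐞 k x)) volume 0 1 :=
    ((hcont _).add (hcont _)).const_mul _
  rw [integral_of_le zero_le_one, MeasureTheory.integral_congr_ae
    (g := fun x ↦ ∑ k ∈ Finset.range n, Complex.I * (𝐞 (k + 1) x + 𝐞 k x)),
    ← integral_of_le zero_le_one, intervalIntegral.integral_finsetSum fun k _ ↦ hterm k]
  · simp_rw [intervalIntegral.integral_const_mul, integral_add (hcont _) (hcont _),
      integral_trigMonomial]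
    have hne (k : ℕ) : (k : ℤ) + 1 ≠ 0 := by positivity
    simp [hne, Nat.pos_of_ne_zero hn]
  · filter_upwards [ae_restrict_mem_Ioo 0 1] with x hx
    exact cot_mul_trigMonomial_sub_one (sin_pi_mul_pos hx).ne' n

lemma integral_periodicLog_mul_trigMonomial_natCast {n : ℕ} (hn : n ≠ 0) :
    ∫ x in (0 : ℝ)..1, (periodicLog x : ℂ) * 𝐞 n x = -(1 / n) := by
  have hparts := ((smoothPeriodic_trigMonomial n).sub_const 1).integral_periodicLog_mul_deriv
    (by simp)
  have hderiv (x : ℝ) : deriv (fun x ↦ 𝐞 n x - 1) x = 2 * Real.pi * Complex.I * n * 𝐞 n x := by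
    simpa using ((hasDerivAt_trigMonomial n x).sub_const 1).deriv
  have hc : 2 * Real.pi * Complex.I * n ≠ 0 := by simp [hn]
  simp only [hderiv, mul_left_comm _ (2 * Real.pi * Complex.I * n : ℂ),
    intervalIntegral.integral_const_mul, integral_cot_mul_trigMonomial_sub_one hn] at hparts
  rw [← mul_right_inj' hc, hparts]
  have hn' : (n : ℂ) ≠ 0 := Nat.cast_ne_zero.2 hn
  field_simp

/-- At `m = 0` the right-hand side is `0` by the convention `1 / 0 = 0`. -/
lemma fc_periodicLog (m : ℤ) :
    fc (fun x ↦ (periodicLog x : ℂ)) m = ((-(1 / |(m : ℝ)|) : ℝ) : ℂ) := by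
  have hreflect (m : ℤ) : fc (fun x ↦ (periodicLog x : ℂ)) m
      = ∫ x in (0 : ℝ)..1, (periodicLog x : ℂ) * 𝐞 m x := by
    have h := intervalIntegral.integral_comp_sub_left (a := 0) (b := 1)
      (fun x ↦ (periodicLog x : ℂ) * 𝐞 m x) 1
    simp only [periodicLog_one_sub, trigMonomial_sub_right, trigMonomial_one_right, one_mul,
      sub_self, sub_zero] at h
    rw [fc_eq_integral, h]
  obtain ⟨n, rfl | rfl⟩ := m.eq_nat_or_neg
  · rw [hreflect]
    rcases eq_or_ne n 0 with rfl | hn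
    · simp [integral_periodicLog]
    · rw [integral_periodicLog_mul_trigMonomial_natCast hn]; simp
  · rw [fc_eq_integral, neg_neg]
    rcases eq_or_ne n 0 with rfl | hn
    · simp [integral_periodicLog]
    · rw [integral_periodicLog_mul_trigMonomial_natCast hn]; simp

/-! ### The periodic logarithm on a uniform grid -/

lemma isPrimitiveRoot_trigMonomial {N : ℕ} (hN : 0 < N) : IsPrimitiveRoot (𝐞 1 (1 / N)) N := by
  rw [trigMonomial_eq_exp]
  convert Complex.isPrimitiveRoot_exp N hN.ne' using 2
  push_cast
  ring

lemma one_sub_pow_eq_prod_trigMonomial {N : ℕ} (hN : 0 < N) (z : ℂ) :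
    1 - z ^ N = ∏ j ∈ Finset.range N, (1 - 𝐞 1 (1 / N) ^ j * z) := by
  simpa [Polynomial.eval_prod] using
    congrArg (Polynomial.eval 1) (X_pow_sub_C_eq_prod (isPrimitiveRoot_trigMonomial hN) hN rfl)

/-- Source of the constant `log (4 sin² (πε))`: the factorisation
`∏ⱼ |e^{2πi(x-j/N)} - 1| = |e^{2πiNx} - 1|` over the `N`-th roots of unity. -/
lemma sum_periodicLog_sub_div {N : ℕ} (hN : 0 < N) {x : ℝ}
    (hx : Real.sin (Real.pi * (N * x)) ≠ 0) :
    ∑ j ∈ Finset.range N, periodicLog (x - j / N) = periodicLog (N * x) := by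
  have hneg (y : ℝ) : ‖1 - 𝐞 1 (-y)‖ = ‖𝐞 1 y - 1‖ := by
    rw [norm_sub_rev, norm_trigMonomial_one_sub_one, norm_trigMonomial_one_sub_one, mul_neg,
      Real.sin_neg, abs_neg]
  have hprod : ‖𝐞 1 (N * x) - 1‖ = ∏ j ∈ Finset.range N, ‖𝐞 1 (x - j / N) - 1‖ := by
    rw [← hneg, ← mul_neg, trigMonomial_natCast_mul_right, one_sub_pow_eq_prod_trigMonomial hN,
      norm_prod]
    refine Finset.prod_congr rfl fun j _ ↦ ?_
    rw [← hneg, ← trigMonomial_natCast_mul_right, ← trigMonomial_add_right]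
    congr 3
    ring
  have hne : ‖𝐞 1 (N * x) - 1‖ ≠ 0 := by simpa [norm_trigMonomial_one_sub_one] using hx
  simp only [periodicLog_eq_two_mul_log_norm, ← Finset.mul_sum]
  rw [hprod] at hne ⊢
  rw [Real.log_prod fun j hj ↦ Finset.prod_ne_zero_iff.1 hne j hj]

/-! ### Equidistant quadrature -/

lemma trigMonomial_one_div_eq_one_iff {N : ℕ} (hN : 0 < N) {n : ℤ} :
    𝐞 n (1 / N) = 1 ↔ (N : ℤ) ∣ n := by
  rw [← (isPrimitiveRoot_trigMonomial hN).zpow_eq_one_iff_dvd, trigMonomial_eq_exp,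
    trigMonomial_eq_exp, ← Complex.exp_int_mul]
  push_cast
  ring_nf

lemma sum_trigMonomial_sub_div {N : ℕ} (hN : 0 < N) (n : ℤ) (x : ℝ) :
    ∑ j ∈ Finset.range N, 𝐞 n (x - j / N) = if (N : ℤ) ∣ n then N * 𝐞 n x else 0 := by
  have hpow (j : ℕ) : 𝐞 n (x - j / N) = 𝐞 n x * 𝐞 (-n) (1 / N) ^ j := by
    rw [← trigMonomial_natCast_mul_right, mul_one_div, trigMonomial_sub_right]
  simp only [hpow, ← Finset.mul_sum]
  split_ifs with hdvd
  · simp_rw [(trigMonomial_one_div_eq_one_iff hN).2 (dvd_neg.2 hdvd), one_pow, Finset.sum_const,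
      Finset.card_range, nsmul_eq_mul, mul_one, mul_comm]
  · have hne : 𝐞 (-n) (1 / N) ≠ 1 :=
      fun h ↦ hdvd (dvd_neg.1 ((trigMonomial_one_div_eq_one_iff hN).1 h))
    have hN' : (N : ℝ) ≠ 0 := Nat.cast_ne_zero.2 hN.ne'
    rw [geom_sum_eq hne, ← trigMonomial_natCast_mul_right, mul_one_div_cancel hN',
      trigMonomial_one_right, sub_self, zero_div, mul_zero]

section Riemann

variable {F : ℝ → ℂ} (hF : Continuous F) (hp : Function.Periodic F 1)
include hF hp

lemma hasSum_fc_mul_natCast {N : ℕ} (hN : 0 < N) (hs : Summable (fc F)) (s : ℝ) :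
    HasSum (fun l : ℤ ↦ fc F (N * l) * 𝐞 (N * l) s)
      (1 / N * ∑ j ∈ Finset.range N, F (s - j / N)) := by
  have hN' : (N : ℂ) ≠ 0 := Nat.cast_ne_zero.2 hN.ne'
  have hall : HasSum (fun n : ℤ ↦ fc F n * (if (N : ℤ) ∣ n then 𝐞 n s else 0))
      (1 / N * ∑ j ∈ Finset.range N, F (s - j / N)) := by
    have h := (hasSum_sum (s := Finset.range N) fun j _ ↦
      hasSum_fc_mul_trigMonomial hF hp hs (s - j / N)).mul_left (1 / (N : ℂ))
    refine h.congr_fun fun n ↦ ?_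
    rw [← Finset.mul_sum, sum_trigMonomial_sub_div hN]
    split_ifs
    · field_simp
    · simp
  have hinj : Function.Injective fun l : ℤ ↦ (N : ℤ) * l :=
    mul_right_injective₀ (Nat.cast_ne_zero.2 hN.ne')
  refine ((hinj.hasSum_iff fun n hn ↦ ?_).2 hall).congr_fun fun l ↦ ?_
  · rw [if_neg fun ⟨l, hl⟩ ↦ hn ⟨l, hl.symm⟩, mul_zero]
  · simp

/-- The error of the rectangle rule consists of the aliased frequencies, the nonzero multiples of
`N`. -/
lemma norm_integral_sub_sum_le {K : ℝ} (hK : ∀ n ≠ 0, ‖fc F n‖ ≤ K * (1 / (n : ℝ) ^ 2)) {N : ℕ}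
    (hN : 0 < N) (s : ℝ) :
    ‖(∫ x in (0 : ℝ)..1, F x) - 1 / N * ∑ j ∈ Finset.range N, F (s - j / N)‖
      ≤ K * (∑' n : ℤ, 1 / (n : ℝ) ^ 2) / N ^ 2 := by
  have hsum : Summable (fc F) := .of_norm_bounded_eventually
    ((Real.summable_one_div_int_pow.2 one_lt_two).mul_left K) ((eventually_cofinite_ne 0).mono hK)
  have halias := (hasSum_ite_eq 0 (fc F 0)).sub (hasSum_fc_mul_natCast hF hp hN hsum s)
  rw [← fc_zero, mul_div_right_comm]
  refine halias.norm_le_of_bounded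
    ((Real.summable_one_div_int_pow.2 one_lt_two).hasSum.mul_left _) fun l ↦ ?_
  rcases eq_or_ne l 0 with rfl | hl
  · simp
  · have hNl := hK (N * l) (mul_ne_zero (Nat.cast_ne_zero.2 hN.ne') hl)
    rw [if_neg hl, zero_sub, norm_neg, norm_mul, norm_trigMonomial, mul_one]
    refine hNl.trans_eq ?_
    push_cast
    field_simp

end Riemann

/-- The error of the rectangle rule for the convolution of `u` with the periodic logarithm, after
removal of its leading term. -/
noncomputable def logQuadError (N : ℕ) (u : ℝ → ℂ) (s : ℝ) : ℂ :=
  (∫ x in (0 : ℝ)..1, (periodicLog x : ℂ) * u (s - x))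
    - 1 / N * (∑ j ∈ Finset.range N, (periodicLog (s - j / N) : ℂ) * u (j / N))
    + 1 / N * (periodicLog (N * s) * u s)

lemma abs_one_div_abs_add_sub_le (m : ℤ) {n : ℤ} (hn : n ≠ 0) :
    |(1 / |((n + m : ℤ) : ℝ)| - 1 / |(n : ℝ)|)| ≤ 2 * (m : ℝ) ^ 2 * (1 / (n : ℝ) ^ 2) := by
  have one_le {k : ℤ} (hk : k ≠ 0) : 1 ≤ |(k : ℝ)| := by exact_mod_cast Int.one_le_abs hk
  have hn1 := one_le hn
  rw [← sq_abs (m : ℝ), ← sq_abs (n : ℝ), mul_one_div, le_div_iff₀ (by positivity)]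
  rcases eq_or_ne m 0 with rfl | hm
  · simp
  have hm1 := one_le hm
  rcases eq_or_ne (n + m) 0 with h | h
  · obtain rfl : m = -n := by omega
    have : |(n : ℝ)|⁻¹ ≤ 1 := inv_le_one_of_one_le₀ hn1
    simp
    nlinarith
  · have hnm1 := one_le h
    have htri : |(n : ℝ)| ≤ |((n + m : ℤ) : ℝ)| + |(m : ℝ)| := by
      push_cast
      simpa using abs_sub (n + m : ℝ) m
    have htri' : |(|(n : ℝ)| - |((n + m : ℤ) : ℝ)|)| ≤ |(m : ℝ)| := by
      push_cast
      simpa using abs_abs_sub_abs_le_abs_sub (n : ℝ) (n + m)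
    rw [div_sub_div _ _ (by positivity) (by positivity), one_mul, mul_one, abs_div, abs_mul,
      abs_abs, abs_abs, div_mul_eq_mul_div, div_le_iff₀ (by positivity)]
    calc |(|(n : ℝ)| - |((n + m : ℤ) : ℝ)|)| * |(n : ℝ)| ^ 2
        ≤ |(m : ℝ)| * (2 * |(m : ℝ)| * |((n + m : ℤ) : ℝ)| * |(n : ℝ)|) := by
          rw [sq]
          gcongr
          nlinarith
      _ = 2 * |(m : ℝ)| ^ 2 * (|((n + m : ℤ) : ℝ)| * |(n : ℝ)|) := by ring

lemma norm_fc_periodicLog_mul_trigMonomial_sub_one_le (m : ℤ) {n : ℤ} (hn : n ≠ 0) :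
    ‖fc (fun x ↦ (periodicLog x : ℂ) * (𝐞 (-m) x - 1)) n‖
      ≤ 2 * (m : ℝ) ^ 2 * (1 / (n : ℝ) ^ 2) := by
  have hlog (k : ℤ) : IntervalIntegrable (fun x ↦ (periodicLog x : ℂ) * 𝐞 k x) volume 0 1 :=
    intervalIntegrable_periodicLog_mul (continuous_trigMonomial k)
  have hfc : fc (fun x ↦ (periodicLog x : ℂ) * (𝐞 (-m) x - 1)) n
      = fc (fun x ↦ (periodicLog x : ℂ)) (n + m) - fc (fun x ↦ (periodicLog x : ℂ)) n := by
    simp only [fc_eq_integral, ← integral_sub (hlog _) (hlog _)]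
    congr! 2 with x
    rw [neg_add_rev, trigMonomial_add]
    ring
  rw [hfc, fc_periodicLog, fc_periodicLog, ← Complex.ofReal_sub, Complex.norm_real,
    Real.norm_eq_abs, neg_sub_neg, abs_sub_comm]
  exact abs_one_div_abs_add_sub_le m hn

lemma logQuadError_trigMonomial {N : ℕ} (hN : 0 < N) {s : ℝ}
    (hs : Real.sin (Real.pi * (N * s)) ≠ 0) (m : ℤ) :
    logQuadError N (𝐞 m) s = 𝐞 m s * ((∫ x in (0 : ℝ)..1, (periodicLog x : ℂ) * (𝐞 (-m) x - 1))
      - 1 / N * ∑ j ∈ Finset.range N,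
        (periodicLog (s - j / N) : ℂ) * (𝐞 (-m) (s - j / N) - 1)) := by
  have hlog : ∑ j ∈ Finset.range N, (periodicLog (s - j / N) : ℂ) = periodicLog (N * s) := by
    exact_mod_cast sum_periodicLog_sub_div hN hs
  have hmode (y : ℝ) : 𝐞 m y = 𝐞 m s * 𝐞 (-m) (s - y) := by
    rw [← trigMonomial_sub_right, sub_sub_cancel]
  have hint : ∫ x in (0 : ℝ)..1, (periodicLog x : ℂ) * (𝐞 (-m) x - 1)
      = ∫ x in (0 : ℝ)..1, (periodicLog x : ℂ) * 𝐞 (-m) x := by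
    simp_rw [mul_sub, mul_one]
    rw [integral_sub (intervalIntegrable_periodicLog_mul (continuous_trigMonomial _))
      intervalIntegrable_periodicLog, integral_periodicLog, sub_zero]
  rw [logQuadError, hint]
  simp only [mul_sub, mul_one, Finset.sum_sub_distrib, hlog]
  simp only [trigMonomial_sub_right m, hmode (_ / _), mul_left_comm _ (𝐞 m s), ← Finset.mul_sum,
    intervalIntegral.integral_const_mul]
  ring

lemma norm_logQuadError_trigMonomial_le {N : ℕ} (hN : 0 < N) {s : ℝ}
    (hs : Real.sin (Real.pi * (N * s)) ≠ 0) (m : ℤ) :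
    ‖logQuadError N (𝐞 m) s‖ ≤ 2 * (m : ℝ) ^ 2 * (∑' n : ℤ, 1 / (n : ℝ) ^ 2) / N ^ 2 := by
  have hmode := (smoothPeriodic_trigMonomial (-m)).sub_const 1
  obtain ⟨L, -, hL⟩ := hmode.deriv.exists_norm_le
  rw [logQuadError_trigMonomial hN hs, norm_mul, norm_trigMonomial, one_mul]
  exact norm_integral_sub_sum_le
    (continuous_periodicLog_mul hmode.continuous (hmode.norm_le_mul_abs_sin (by simp) hL))
    (fun x ↦ by simp only [periodicLog_periodic x, hmode.periodic x])
    (fun n hn ↦ norm_fc_periodicLog_mul_trigMonomial_sub_one_le m hn) hN s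

lemma hasSum_integral_periodicLog_mul {u : ℝ → ℂ} (hu : SmoothPeriodic u) (s : ℝ) :
    HasSum (fun m ↦ fc u m * ∫ x in (0 : ℝ)..1, (periodicLog x : ℂ) * 𝐞 m (s - x))
      (∫ x in (0 : ℝ)..1, (periodicLog x : ℂ) * u (s - x)) := by
  simp_rw [← intervalIntegral.integral_const_mul]
  have hu0 := hu.summable_sobCoeff 0
  refine intervalIntegral.hasSum_integral_of_dominated_convergence
    (fun m x ↦ sobCoeff 0 u m * ‖(periodicLog x : ℂ)‖) (fun m ↦ ?_)
    (fun m ↦ .of_forall fun x _ ↦ ?_) (.of_forall fun x _ ↦ hu0.mul_right _) ?_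
    (.of_forall fun x _ ↦ ?_)
  · have := measurable_periodicLog
    have := (continuous_trigMonomial m).measurable
    fun_prop
  · simp [sobCoeff_zero]
  · simp_rw [tsum_mul_right]
    exact intervalIntegrable_periodicLog.norm.const_mul _
  · simpa only [mul_left_comm] using (hu.hasSum_fc (s - x)).mul_left (periodicLog x : ℂ)

lemma hasSum_logQuadError {u : ℝ → ℂ} (hu : SmoothPeriodic u) (N : ℕ) (s : ℝ) :
    HasSum (fun m ↦ fc u m * logQuadError N (𝐞 m) s) (logQuadError N u s) := by
  have hgrid := hasSum_sum (s := Finset.range N) fun j _ ↦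
    (hu.hasSum_fc (j / N)).mul_left (periodicLog (s - j / N) : ℂ)
  refine (((hasSum_integral_periodicLog_mul hu s).sub (hgrid.mul_left (1 / (N : ℂ)))).add
    (((hu.hasSum_fc s).mul_left (periodicLog (N * s) : ℂ)).mul_left (1 / (N : ℂ)))).congr_fun
    fun m ↦ ?_
  simp only [logQuadError, mul_left_comm _ (fc u m), ← Finset.mul_sum]
  ring

lemma exists_norm_logQuadError_le : ∃ C ≥ 0, ∀ u, SmoothPeriodic u → ∀ N : ℕ, 0 < N → ∀ s,
    Real.sin (Real.pi * (N * s)) ≠ 0 → ‖logQuadError N u s‖ ≤ C / N ^ 2 * sobNorm (3 : ℕ) u := by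
  obtain ⟨S, hS0, hS⟩ := exists_tsum_sobCoeff_le
  set ζ := ∑' n : ℤ, 1 / (n : ℝ) ^ 2
  have : 0 ≤ ζ := tsum_nonneg fun n ↦ by positivity
  refine ⟨2 * ζ * S, by positivity, fun u hu N hN s hs ↦ ?_⟩
  obtain ⟨hsum, hle⟩ := hS u hu 2
  have hterm (m : ℤ) :
      ‖fc u m * logQuadError N (𝐞 m) s‖ ≤ 2 * ζ / N ^ 2 * sobCoeff 2 u m := by
    calc ‖fc u m * logQuadError N (𝐞 m) s‖
        ≤ ‖fc u m‖ * (2 * (m : ℝ) ^ 2 * ζ / N ^ 2) := by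
          rw [norm_mul]
          gcongr
          exact norm_logQuadError_trigMonomial_le hN hs m
      _ = 2 * ζ / N ^ 2 * (|(m : ℝ)| ^ 2 * ‖fc u m‖) := by rw [sq_abs]; ring
      _ ≤ 2 * ζ / N ^ 2 * sobCoeff 2 u m := by gcongr; exact abs_pow_mul_norm_fc_le_sobCoeff
  calc ‖logQuadError N u s‖ ≤ 2 * ζ / N ^ 2 * ∑' m, sobCoeff 2 u m :=
        (hasSum_logQuadError hu N s).norm_le_of_bounded (hsum.hasSum.mul_left _) hterm
    _ ≤ 2 * ζ / N ^ 2 * (S * sobNorm (3 : ℕ) u) := by gcongr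
    _ = 2 * ζ * S / N ^ 2 * sobNorm (3 : ℕ) u := by ring

lemma exists_norm_integral_sub_sum_le : ∃ C ≥ 0, ∀ u, SmoothPeriodic u → ∀ N : ℕ, 0 < N →
    ‖(∫ x in (0 : ℝ)..1, u x) - 1 / N * ∑ j ∈ Finset.range N, u (j / N)‖
      ≤ C / N ^ 2 * sobNorm (3 : ℕ) u := by
  obtain ⟨S, hS0, hS⟩ := exists_tsum_sobCoeff_le
  have : 0 ≤ ∑' n : ℤ, 1 / (n : ℝ) ^ 2 := tsum_nonneg fun n ↦ by positivity
  refine ⟨S * ∑' n : ℤ, 1 / (n : ℝ) ^ 2, by positivity, fun u hu N hN ↦ ?_⟩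
  obtain ⟨hsum, hle⟩ := hS u hu 2
  have hreflect (n : ℤ) : fc (fun x ↦ u (-x)) n = fc u (-n) := by
    simpa [fc_eq_integral, trigMonomial_neg_right] using integral_comp_sub_left_of_periodic
      (hu.mul (smoothPeriodic_trigMonomial n)).periodic 0
  have hdecay (n : ℤ) (hn : n ≠ 0) :
      ‖fc (fun x ↦ u (-x)) n‖ ≤ S * sobNorm (3 : ℕ) u * (1 / (n : ℝ) ^ 2) := by
    have : (n : ℝ) ≠ 0 := Int.cast_ne_zero.2 hn
    rw [hreflect, mul_one_div, le_div_iff₀ (by positivity), mul_comm]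
    calc (n : ℝ) ^ 2 * ‖fc u (-n)‖ = |((-n : ℤ) : ℝ)| ^ 2 * ‖fc u (-n)‖ := by simp
      _ ≤ sobCoeff 2 u (-n) := abs_pow_mul_norm_fc_le_sobCoeff
      _ ≤ S * sobNorm (3 : ℕ) u := (hsum.le_tsum _ fun _ _ ↦ sobCoeff_nonneg).trans hle
  have h := norm_integral_sub_sum_le (F := fun x ↦ u (-x)) (hu.continuous.comp continuous_neg)
    (fun x ↦ by simpa [sub_eq_add_neg, add_comm] using hu.periodic.sub_eq (-x)) hdecay hN 0
  rw [← fc_zero, hreflect, neg_zero, fc_zero] at h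
  simpa [mul_right_comm, mul_div_right_comm] using h

/-! ### Smooth doubly periodic kernels -/

/-- The partial derivative of a kernel in its first variable. -/
noncomputable def derivFst (A : ℝ → ℝ → ℂ) (s t : ℝ) : ℂ := deriv (fun s ↦ A s t) s

/-- The partial derivative of a kernel in its second variable. -/
noncomputable def derivSnd (A : ℝ → ℝ → ℂ) (s t : ℝ) : ℂ := deriv (A s) t

namespace SPK

variable {A B : ℝ → ℝ → ℂ}

lemma row (hA : SPK A) (s : ℝ) : SmoothPeriodic (A s) :=
  ⟨hA.1.comp (contDiff_prodMk_right s), hA.2.2 s⟩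

lemma diag (hA : SPK A) : SmoothPeriodic fun t ↦ A t t :=
  ⟨hA.1.comp (contDiff_id.prodMk contDiff_id), fun t ↦ by rw [hA.2.1, hA.2.2]⟩

lemma swap (hA : SPK A) : SPK fun s t ↦ A t s :=
  ⟨hA.1.comp (contDiff_snd.prodMk contDiff_fst), fun _ _ ↦ hA.2.2 _ _, fun _ _ ↦ hA.2.1 _ _⟩

lemma shear (hA : SPK A) : SPK fun s x ↦ A s (s - x) := by
  refine ⟨hA.1.comp (contDiff_fst.prodMk (contDiff_fst.sub contDiff_snd)), fun s x ↦ ?_,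
    fun s x ↦ ?_⟩
  · simp only [hA.2.1, add_sub_right_comm s 1 x, hA.2.2]
  · simpa only [sub_add_eq_sub_sub, sub_add_cancel] using (hA.2.2 s (s - x - 1)).symm

lemma sub (hA : SPK A) (hB : SPK B) : SPK fun s t ↦ A s t - B s t :=
  ⟨hA.1.sub hB.1, fun s t ↦ by simp only [hA.2.1, hB.2.1],
    fun s t ↦ by simp only [hA.2.2, hB.2.2]⟩

lemma mul (hA : SPK A) (hB : SPK B) : SPK fun s t ↦ A s t * B s t :=
  ⟨hA.1.mul hB.1, fun s t ↦ by simp only [hA.2.1, hB.2.1],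
    fun s t ↦ by simp only [hA.2.2, hB.2.2]⟩

lemma const_mul (hA : SPK A) (c : ℂ) : SPK fun s t ↦ c * A s t :=
  ⟨contDiff_const.mul hA.1, fun s t ↦ by simp only [hA.2.1],
    fun s t ↦ by simp only [hA.2.2]⟩

lemma of_snd {f : ℝ → ℂ} (hf : SmoothPeriodic f) : SPK fun _ t ↦ f t :=
  ⟨hf.contDiff.comp contDiff_snd, fun _ _ ↦ rfl, fun _ t ↦ hf.periodic t⟩

lemma of_fst {f : ℝ → ℂ} (hf : SmoothPeriodic f) : SPK fun s _ ↦ f s := (of_snd hf).swap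

lemma exists_norm_le (hA : SPK A) : ∃ M ≥ 0, ∀ s t, ‖A s t‖ ≤ M := by
  obtain ⟨M, hM⟩ := ((isCompact_Icc (a := (0 : ℝ)) (b := 1)).prod
    (isCompact_Icc (a := (0 : ℝ)) (b := 1))).exists_bound_of_continuousOn
      hA.1.continuous.continuousOn
  have hbound (s t : ℝ) : ‖A s t‖ ≤ M := by
    obtain ⟨s', hs', hs⟩ := (show Function.Periodic (fun s ↦ A s t) 1 from
      fun s ↦ hA.2.1 s t).exists_mem_Ico₀ one_pos s
    obtain ⟨t', ht', ht⟩ := (hA.row s').periodic.exists_mem_Ico₀ one_pos t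
    rw [hs, ht]
    exact hM (s', t') ⟨Ico_subset_Icc_self hs', Ico_subset_Icc_self ht'⟩
  exact ⟨M, (norm_nonneg _).trans (hbound 0 0), hbound⟩

lemma hasDerivAt_fst (hA : SPK A) (s t : ℝ) :
    HasDerivAt (fun s ↦ A s t) (derivFst A s t) s :=
  (hA.swap.row t).hasDerivAt s

lemma hasDerivAt_snd (hA : SPK A) (s t : ℝ) : HasDerivAt (A s) (derivSnd A s t) t :=
  (hA.row s).hasDerivAt t

protected lemma derivFst (hA : SPK A) : SPK (derivFst A) := by
  refine ⟨?_, fun s t ↦ (hA.swap.row t).deriv.periodic s, fun s t ↦ ?_⟩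
  · have hfderiv : (fun p : ℝ × ℝ ↦ _root_.derivFst A p.1 p.2)
        = fun p ↦ fderiv ℝ (fun p : ℝ × ℝ ↦ A p.1 p.2) p (1, 0) := by
      funext p
      have hp := (hA.1.differentiable (by simp) p).hasFDerivAt
      have hline : HasDerivAt (fun s : ℝ ↦ (s, p.2)) (1, 0) p.1 :=
        (hasDerivAt_id p.1).prodMk (hasDerivAt_const _ p.2)
      exact (hp.comp_hasDerivAt p.1 hline).deriv
    rw [hfderiv]
    exact (hA.1.fderiv_right (m := (⊤ : ℕ∞)) (by simp)).clm_apply contDiff_const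
  · simp only [_root_.derivFst, hA.2.2]

protected lemma derivSnd (hA : SPK A) : SPK (derivSnd A) := hA.swap.derivFst.swap

/-- The integrand of `∫ A(s, t) f(t) dt` in the variable `x = s - t`. -/
lemma mul_comp_sub (hB : SPK B) {f : ℝ → ℂ} (hf : SmoothPeriodic f) :
    SPK fun s x ↦ B s x * f (s - x) :=
  hB.mul (of_snd hf).shear

end SPK

/-- Sobolev bounds propagate from order `0` to every order along operators `T B i` that satisfy
`(T B i f)′ = T (D B) i f + T B i f′`. -/
lemma exists_sobNorm_le_of_leibniz {ι : Type*} {T : (ℝ → ℝ → ℂ) → ι → (ℝ → ℂ) → ℝ → ℂ}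
    {D : (ℝ → ℝ → ℂ) → ℝ → ℝ → ℂ} (hD : ∀ B, SPK B → SPK (D B))
    (hT : ∀ B, SPK B → ∀ i f, SmoothPeriodic f → SmoothPeriodic (T B i f))
    (hderiv : ∀ B, SPK B → ∀ i f, SmoothPeriodic f →
      deriv (T B i f) = fun x ↦ T (D B) i f x + T B i (deriv f) x)
    (hzero : ∀ B, SPK B → ∃ C ≥ 0, ∀ i f, SmoothPeriodic f →
      sobNorm (0 : ℕ) (T B i f) ≤ C * sobNorm (0 : ℕ) f)
    (k : ℕ) {B : ℝ → ℝ → ℂ} (hB : SPK B) :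
    ∃ C ≥ 0, ∀ i f, SmoothPeriodic f → sobNorm k (T B i f) ≤ C * sobNorm k f := by
  induction k generalizing B with
  | zero => exact hzero B hB
  | succ k ih =>
    obtain ⟨C, hC0, hC⟩ := ih hB
    obtain ⟨C', hC'0, hC'⟩ := ih (hD B hB)
    refine ⟨C + C' + C * (2 * Real.pi), by positivity, fun i f hf ↦ ?_⟩
    have hf' := hf.deriv
    calc sobNorm (k + 1 : ℕ) (T B i f)
        ≤ sobNorm k (T B i f) + (sobNorm k (T (D B) i f) + sobNorm k (T B i (deriv f))) := by
          refine (sobNorm_succ_le (hT B hB i f hf) k).trans ?_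
          rw [hderiv B hB i f hf]
          gcongr
          exact sobNorm_add_le (hT _ (hD B hB) i f hf) (hT B hB i _ hf') k
      _ ≤ C * sobNorm k f + (C' * sobNorm k f + C * sobNorm k (deriv f)) := by
          gcongr
          exacts [hC i f hf, hC' i f hf, hC i _ hf']
      _ ≤ C * sobNorm (k + 1 : ℕ) f + (C' * sobNorm (k + 1 : ℕ) f
            + C * (2 * Real.pi * sobNorm (k + 1 : ℕ) f)) := by
          have hmono : sobNorm k f ≤ sobNorm (k + 1 : ℕ) f := sobNorm_mono hf k.le_succ
          gcongr
          exact sobNorm_deriv_le hf k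
      _ = (C + C' + C * (2 * Real.pi)) * sobNorm (k + 1 : ℕ) f := by ring

lemma SPK.exists_sobNorm_row_mul_le {A : ℝ → ℝ → ℂ} (hA : SPK A) (k : ℕ) :
    ∃ C ≥ 0, ∀ s f, SmoothPeriodic f → sobNorm k (fun t ↦ A s t * f t) ≤ C * sobNorm k f := by
  refine exists_sobNorm_le_of_leibniz (T := fun A s f t ↦ A s t * f t) (D := derivSnd)
    (fun _ hB ↦ hB.derivSnd) (fun _ hB s _ hf ↦ (hB.row s).mul hf) (fun _ hB s _ hf ↦ ?_)
    (fun _ hB ↦ ?_) k hA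
  · exact funext fun t ↦ ((hB.hasDerivAt_snd s t).mul (hf.hasDerivAt t)).deriv
  · obtain ⟨M, hM0, hM⟩ := hB.exists_norm_le
    refine ⟨M, hM0, fun s f hf ↦ ?_⟩
    refine sobNorm_zero_le_of_norm_le_mul ((hB.row s).mul hf) hf hM0 fun t ↦ ?_
    rw [norm_mul]
    gcongr
    exact hM s t

/-! ### Integral operators with logarithmic kernels -/

/-- The operator `f ↦ ∫₀¹ w(s - t) B(s, s - t) f(t) dt`, written in the variable `x = s - t` so that
the singularity of `w` does not move with `s`. -/
noncomputable def convOp (w : ℝ → ℂ) (B : ℝ → ℝ → ℂ) (f : ℝ → ℂ) (s : ℝ) : ℂ :=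
  ∫ x in (0 : ℝ)..1, w x * (B s x * f (s - x))

section ConvOp

variable {w : ℝ → ℂ} (hw : IntervalIntegrable w volume 0 1) {B H : ℝ → ℝ → ℂ} {f : ℝ → ℂ}
include hw

lemma SPK.intervalIntegrable_mul_row (hH : SPK H) (s : ℝ) :
    IntervalIntegrable (fun x ↦ w x * H s x) volume 0 1 :=
  hw.mul_continuousOn (hH.row s).continuous.continuousOn

lemma SPK.hasDerivAt_integral_mul (hH : SPK H) (s : ℝ) :
    HasDerivAt (fun s ↦ ∫ x in (0 : ℝ)..1, w x * H s x)
      (∫ x in (0 : ℝ)..1, w x * derivFst H s x) s := by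
  obtain ⟨M, -, hM⟩ := hH.derivFst.exists_norm_le
  have hi {G : ℝ → ℝ → ℂ} (hG : SPK G) (s : ℝ) := hG.intervalIntegrable_mul_row hw s
  refine (hasDerivAt_integral_of_dominated_loc_of_deriv_le (F := fun s x ↦ w x * H s x)
    (F' := fun s x ↦ w x * derivFst H s x) (bound := fun x ↦ ‖w x‖ * M) univ_mem
    (.of_forall fun s ↦ (hi hH s).def'.aestronglyMeasurable) (hi hH s)
    (hi hH.derivFst s).def'.aestronglyMeasurable (.of_forall fun x _ s _ ↦ ?_)
    (hw.norm.mul_const M) (.of_forall fun x _ s _ ↦ (hH.hasDerivAt_fst s x).const_mul _)).2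
  rw [norm_mul]
  gcongr
  exact hM s x

lemma SPK.smoothPeriodic_integral_mul (hH : SPK H) :
    SmoothPeriodic fun s ↦ ∫ x in (0 : ℝ)..1, w x * H s x := by
  refine ⟨contDiff_infty.2 fun n ↦ ?_, fun s ↦ by simp only [hH.2.1]⟩
  induction n generalizing H with
  | zero =>
    exact contDiff_zero.2 (continuous_iff_continuousAt.2 fun s ↦
      (hH.hasDerivAt_integral_mul hw s).continuousAt)
  | succ n ih =>
    push_cast
    refine contDiff_succ_iff_deriv.2
      ⟨fun s ↦ (hH.hasDerivAt_integral_mul hw s).differentiableAt, by simp, ?_⟩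
    rw [funext fun s ↦ (hH.hasDerivAt_integral_mul hw s).deriv]
    exact ih hH.derivFst

lemma smoothPeriodic_convOp (hB : SPK B) (hf : SmoothPeriodic f) :
    SmoothPeriodic (convOp w B f) :=
  (hB.mul_comp_sub hf).smoothPeriodic_integral_mul hw

lemma deriv_convOp (hB : SPK B) (hf : SmoothPeriodic f) :
    deriv (convOp w B f) = fun s ↦ convOp w (derivFst B) f s + convOp w B (deriv f) s := by
  funext s
  unfold convOp
  rw [((hB.mul_comp_sub hf).hasDerivAt_integral_mul hw s).deriv,
    ← integral_add ((hB.derivFst.mul_comp_sub hf).intervalIntegrable_mul_row hw s)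
      ((hB.mul_comp_sub hf.deriv).intervalIntegrable_mul_row hw s)]
  refine integral_congr fun x _ ↦ ?_
  have hshift := (hf.hasDerivAt (s - x)).comp_sub_const s x
  simp only [← mul_add]
  exact congrArg _ ((hB.hasDerivAt_fst s x).mul hshift).deriv

lemma exists_sobNorm_convOp_deriv_le
    (hzero : ∀ B, SPK B → ∃ C ≥ 0, ∀ f, SmoothPeriodic f →
      sobNorm (0 : ℕ) (convOp w B (deriv f)) ≤ C * sobNorm (0 : ℕ) f) (k : ℕ) (hB : SPK B) :
    ∃ C ≥ 0, ∀ f, SmoothPeriodic f →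
      sobNorm k (convOp w B (deriv f)) ≤ C * sobNorm k f := by
  simpa using exists_sobNorm_le_of_leibniz (ι := Unit) (T := fun B _ f ↦ convOp w B (deriv f))
    (D := derivFst) (fun _ hB ↦ hB.derivFst)
    (fun _ hB _ _ hf ↦ smoothPeriodic_convOp hw hB hf.deriv)
    (fun _ hB _ _ hf ↦ deriv_convOp hw hB hf.deriv) (by simpa using hzero) k hB

end ConvOp

lemma SmoothPeriodic.integral_norm_comp_sub_le {f : ℝ → ℂ} (hf : SmoothPeriodic f) (s : ℝ) :
    ∫ x in (0 : ℝ)..1, ‖f (s - x)‖ ≤ sobNorm (0 : ℕ) f := by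
  rw [integral_comp_sub_left_of_periodic (p := fun x ↦ ‖f x‖)
    (fun x ↦ by simp only [hf.periodic x]) s, sobNorm_zero_eq_sqrt_integral hf]
  have : IsProbabilityMeasure (volume.restrict (Ioc (0 : ℝ) 1)) := ⟨by simp⟩
  have hint {g : ℝ → ℝ} (hg : Continuous g) : Integrable g (volume.restrict (Ioc 0 1)) :=
    (hg.intervalIntegrable 0 1).1
  have hJensen := (even_two.convexOn_pow (𝕜 := ℝ)).map_integral_le (continuous_pow 2).continuousOn
    isClosed_univ (.of_forall fun _ ↦ mem_univ _) (hint hf.continuous.norm)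
    (hint (hf.continuous.norm.pow 2))
  simp only [integral_of_le zero_le_one]
  exact Real.le_sqrt_of_sq_le hJensen

lemma SmoothPeriodic.sqrt_integral_sq_norm_comp_sub {f : ℝ → ℂ} (hf : SmoothPeriodic f) (s : ℝ) :
    √(∫ x in (0 : ℝ)..1, ‖f (s - x)‖ ^ 2) = sobNorm (0 : ℕ) f := by
  rw [sobNorm_zero_eq_sqrt_integral hf,
    integral_comp_sub_left_of_periodic (p := fun x ↦ ‖f x‖ ^ 2)
      (fun x ↦ by simp only [hf.periodic x]) s]

lemma SmoothPeriodic.norm_integral_mul_comp_sub_le {f g : ℝ → ℂ} (hf : SmoothPeriodic f) {M : ℝ}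
    (hg : ∀ x, ‖g x‖ ≤ M) (s : ℝ) :
    ‖∫ x in (0 : ℝ)..1, g x * f (s - x)‖ ≤ M * sobNorm (0 : ℕ) f := by
  have hcont : Continuous fun x ↦ f (s - x) := hf.continuous.comp (by fun_prop)
  calc ‖∫ x in (0 : ℝ)..1, g x * f (s - x)‖
      ≤ ∫ x in (0 : ℝ)..1, M * ‖f (s - x)‖ := by
        refine intervalIntegral.norm_integral_le_of_norm_le zero_le_one (.of_forall fun x _ ↦ ?_)
          ((hcont.norm.const_mul M).intervalIntegrable _ _)
        rw [norm_mul]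
        gcongr
        exact hg x
    _ = M * ∫ x in (0 : ℝ)..1, ‖f (s - x)‖ := integral_const_mul _ _
    _ ≤ M * sobNorm (0 : ℕ) f := by
        have := (norm_nonneg _).trans (hg 0)
        gcongr
        exact hf.integral_norm_comp_sub_le s

section ZeroOrder

variable {B M : ℝ → ℝ → ℂ} {f : ℝ → ℂ}

lemma SPK.hasDerivAt_mul_comp_sub (hB : SPK B) (hf : SmoothPeriodic f) (s x : ℝ) :
    HasDerivAt (fun x ↦ B s x * f (s - x))
      (derivSnd B s x * f (s - x) - B s x * deriv f (s - x)) x := by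
  have hshift := (hf.hasDerivAt (s - x)).comp_const_sub s x
  exact ((hB.hasDerivAt_snd s x).mul hshift).congr_deriv (by ring)

lemma convOp_one_deriv (hB : SPK B) (hf : SmoothPeriodic f) (s : ℝ) :
    convOp 1 B (deriv f) s = ∫ x in (0 : ℝ)..1, derivSnd B s x * f (s - x) := by
  have hint {H : ℝ → ℝ → ℂ} (hH : SPK H) : IntervalIntegrable (H s) volume 0 1 :=
    (hH.row s).continuous.intervalIntegrable 0 1
  have hFTC := integral_eq_sub_of_hasDerivAt (fun x _ ↦ hB.hasDerivAt_mul_comp_sub hf s x)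
    (hint ((hB.derivSnd.mul_comp_sub hf).sub (hB.mul_comp_sub hf.deriv)))
  rw [integral_sub (hint (hB.derivSnd.mul_comp_sub hf)) (hint (hB.mul_comp_sub hf.deriv))] at hFTC
  have hper : B s 1 * f (s - 1) = B s 0 * f (s - 0) := by
    simpa only [zero_add] using ((hB.mul_comp_sub hf).row s).periodic 0
  rw [hper, sub_self, sub_eq_zero] at hFTC
  simpa only [convOp, Pi.one_apply, one_mul] using hFTC.symm

lemma exists_sobNorm_zero_convOp_one_deriv_le (hB : SPK B) : ∃ C ≥ 0, ∀ f, SmoothPeriodic f →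
    sobNorm (0 : ℕ) (convOp 1 B (deriv f)) ≤ C * sobNorm (0 : ℕ) f := by
  obtain ⟨C, hC0, hC⟩ := hB.derivSnd.exists_norm_le
  refine ⟨C, hC0, fun f hf ↦ sobNorm_zero_le_of_norm_le
    (smoothPeriodic_convOp (w := 1) intervalIntegrable_const hB hf.deriv) fun s ↦ ?_⟩
  rw [convOp_one_deriv hB hf]
  exact hf.norm_integral_mul_comp_sub_le (hC s) s

lemma fc_convOp_periodicLog_const (hf : SmoothPeriodic f) (m : ℤ) :
    fc (convOp (fun x ↦ (periodicLog x : ℂ)) (fun _ _ ↦ 1) f) m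
      = ((-(1 / |(m : ℝ)|) : ℝ) : ℂ) * fc f m := by
  have hterm (m : ℤ) (s : ℝ) : ∫ x in (0 : ℝ)..1, (periodicLog x : ℂ) * 𝐞 m (s - x)
      = ((-(1 / |(m : ℝ)|) : ℝ) : ℂ) * 𝐞 m s := by
    rw [← fc_periodicLog, fc_eq_integral, ← intervalIntegral.integral_mul_const]
    refine integral_congr fun x _ ↦ ?_
    simp only [trigMonomial_sub_right]
    ring
  refine fc_of_hasSum (c := fun m ↦ ((-(1 / |(m : ℝ)|) : ℝ) : ℂ) * fc f m) ?_ (fun s ↦ ?_) m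
  · refine (hf.summable_sobCoeff 0).of_nonneg_of_le (fun _ ↦ norm_nonneg _) fun m ↦ ?_
    rw [norm_mul, sobCoeff_zero, Complex.norm_real, norm_neg, Real.norm_eq_abs, abs_div,
      abs_one, abs_abs, one_div, ← Int.cast_abs, ← Nat.cast_natAbs]
    exact mul_le_of_le_one_left (norm_nonneg _) (Nat.cast_inv_le_one m.natAbs)
  · have h := hasSum_integral_periodicLog_mul hf s
    simp only [hterm] at h
    simp only [convOp, one_mul]
    convert! h using 2
    ring

lemma sobNorm_zero_convOp_periodicLog_const_deriv_le (hf : SmoothPeriodic f) :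
    sobNorm (0 : ℕ) (convOp (fun x ↦ (periodicLog x : ℂ)) (fun _ _ ↦ 1) (deriv f))
      ≤ 2 * Real.pi * sobNorm (0 : ℕ) f := by
  have hone : SPK fun _ _ ↦ 1 := ⟨contDiff_const, fun _ _ ↦ rfl, fun _ _ ↦ rfl⟩
  refine sobNorm_le_of_sobCoeff_le
    (smoothPeriodic_convOp intervalIntegrable_periodicLog hone hf.deriv) hf (by positivity)
    fun m ↦ ?_
  rw [sobCoeff_zero, sobCoeff_zero, fc_convOp_periodicLog_const hf.deriv, norm_mul,
    hf.norm_fc_deriv, Complex.norm_real, norm_neg, Real.norm_eq_abs, abs_div, abs_one, abs_abs]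
  calc 1 / |(m : ℝ)| * (2 * Real.pi * (|(m : ℝ)| * ‖fc f m‖))
      = 2 * Real.pi * ‖fc f m‖ * (|(m : ℝ)| / |(m : ℝ)|) := by ring
    _ ≤ 2 * Real.pi * ‖fc f m‖ := mul_le_of_le_one_right (by positivity) (div_self_le_one _)

lemma exists_norm_convOp_periodicLog_le (hB : SPK B) : ∃ C ≥ 0, ∀ f, SmoothPeriodic f → ∀ s,
    ‖convOp (fun x ↦ (periodicLog x : ℂ)) B f s‖ ≤ C * sobNorm (0 : ℕ) f := by
  obtain ⟨L, hL0, hL⟩ := exists_norm_integral_periodicLog_mul_le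
  obtain ⟨C, hC0, hC⟩ := hB.exists_norm_le
  refine ⟨L * C, by positivity, fun f hf s ↦ ?_⟩
  have hcont := ((hB.mul_comp_sub hf).row s).continuous
  have hcont' : Continuous fun x ↦ f (s - x) := hf.continuous.comp (by fun_prop)
  calc ‖convOp (fun x ↦ (periodicLog x : ℂ)) B f s‖
      ≤ L * √(∫ x in (0 : ℝ)..1, ‖B s x * f (s - x)‖ ^ 2) := hL _ hcont
    _ ≤ L * √(∫ x in (0 : ℝ)..1, C ^ 2 * ‖f (s - x)‖ ^ 2) := by
        gcongr
        refine integral_mono_on zero_le_one ((hcont.norm.pow 2).intervalIntegrable _ _)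
          ((continuous_const.mul (hcont'.norm.pow 2)).intervalIntegrable _ _) fun x _ ↦ ?_
        rw [norm_mul, mul_pow]
        gcongr
        exact hC s x
    _ = L * C * sobNorm (0 : ℕ) f := by
        rw [intervalIntegral.integral_const_mul, Real.sqrt_mul (sq_nonneg C), Real.sqrt_sq hC0,
          hf.sqrt_integral_sq_norm_comp_sub, mul_assoc]

/-- Integration by parts moves the derivative from `f` to the kernel; the zero of `M` on `x = 0`
compensates the pole of the cotangent. -/
lemma convOp_periodicLog_deriv_of_zero (hM : SPK M) (hM0 : ∀ s, M s 0 = 0) (hf : SmoothPeriodic f)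
    (s : ℝ) :
    convOp (fun x ↦ (periodicLog x : ℂ)) M (deriv f) s
      = convOp (fun x ↦ (periodicLog x : ℂ)) (derivSnd M) f s
        + 2 * Real.pi * ∫ x in (0 : ℝ)..1, (Real.cot (Real.pi * x) : ℂ) * M s x * f (s - x) := by
  have hF := (hM.mul_comp_sub hf).row s
  have hIBP := hF.integral_periodicLog_mul_deriv (by simp only [hM0, zero_mul])
  simp only [(hM.hasDerivAt_mul_comp_sub hf s _).deriv, mul_sub] at hIBP
  rw [integral_sub
    (intervalIntegrable_periodicLog_mul ((hM.derivSnd.mul_comp_sub hf).row s).continuous)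
    (intervalIntegrable_periodicLog_mul ((hM.mul_comp_sub hf.deriv).row s).continuous)] at hIBP
  simp only [mul_assoc, convOp]
  linear_combination -hIBP

lemma exists_norm_convOp_periodicLog_deriv_le_of_zero (hM : SPK M) (hM0 : ∀ s, M s 0 = 0) :
    ∃ C ≥ 0, ∀ f, SmoothPeriodic f → ∀ s,
      ‖convOp (fun x ↦ (periodicLog x : ℂ)) M (deriv f) s‖ ≤ C * sobNorm (0 : ℕ) f := by
  obtain ⟨C, hC0, hC⟩ := exists_norm_convOp_periodicLog_le hM.derivSnd
  obtain ⟨D, hD0, hD⟩ := hM.derivSnd.exists_norm_le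
  refine ⟨C + 2 * Real.pi * (D / 2), by positivity, fun f hf s ↦ ?_⟩
  have hcot := hf.norm_integral_mul_comp_sub_le ((hM.row s).norm_cot_mul_le (hM0 s) (hD s)) s
  rw [convOp_periodicLog_deriv_of_zero hM hM0 hf, add_mul, mul_assoc (2 * Real.pi)]
  refine norm_add_le_of_le (hC f hf s) ?_
  rw [norm_mul, norm_mul, Complex.norm_ofNat, Complex.norm_real, Real.norm_of_nonneg Real.pi_nonneg]
  exact mul_le_mul_of_nonneg_left hcot (by positivity)

/-- The kernel is split into its restriction to `x = 0`, for which the operator is a multiple of a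
Fourier multiplier of order `0`, and a kernel that vanishes on `x = 0`. -/
lemma exists_sobNorm_zero_convOp_periodicLog_deriv_le (hB : SPK B) :
    ∃ C ≥ 0, ∀ f, SmoothPeriodic f →
      sobNorm (0 : ℕ) (convOp (fun x ↦ (periodicLog x : ℂ)) B (deriv f))
        ≤ C * sobNorm (0 : ℕ) f := by
  have hrestr : SPK fun s _ ↦ B s 0 := .of_fst (hB.swap.row 0)
  have hM : SPK fun s x ↦ B s x - B s 0 := hB.sub hrestr
  have hone : SPK fun _ _ ↦ 1 := ⟨contDiff_const, fun _ _ ↦ rfl, fun _ _ ↦ rfl⟩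
  obtain ⟨b, hb0, hb⟩ := hrestr.exists_norm_le
  obtain ⟨C, hC0, hC⟩ :=
    exists_norm_convOp_periodicLog_deriv_le_of_zero hM fun s ↦ sub_self (B s 0)
  refine ⟨b * (2 * Real.pi) + C, by positivity, fun f hf ↦ ?_⟩
  set w : ℝ → ℂ := fun x ↦ (periodicLog x : ℂ)
  have hw : IntervalIntegrable w volume 0 1 := intervalIntegrable_periodicLog
  have hsplit : convOp w B (deriv f) = fun s ↦ B s 0 * convOp w (fun _ _ ↦ 1) (deriv f) s
      + convOp w (fun s x ↦ B s x - B s 0) (deriv f) s := by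
    funext s
    simp only [convOp]
    rw [← intervalIntegral.integral_const_mul, ← integral_add
      (((hone.mul_comp_sub hf.deriv).intervalIntegrable_mul_row hw s).const_mul _)
      ((hM.mul_comp_sub hf.deriv).intervalIntegrable_mul_row hw s)]
    exact integral_congr fun x _ ↦ by ring
  have hleft := smoothPeriodic_convOp hw hone hf.deriv
  have hright := smoothPeriodic_convOp hw hM hf.deriv
  have hleft' := (hB.swap.row 0).mul hleft
  rw [hsplit, add_mul, mul_assoc]
  refine (sobNorm_add_le hleft' hright 0).trans (add_le_add ?_
    (sobNorm_zero_le_of_norm_le hright (hC f hf)))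
  refine (sobNorm_zero_le_of_norm_le_mul hleft' hleft hb0 fun s ↦ ?_).trans
    (mul_le_mul_of_nonneg_left (sobNorm_zero_convOp_periodicLog_const_deriv_le hf) hb0)
  rw [norm_mul]
  exact mul_le_mul_of_nonneg_right (hb s 0) (norm_nonneg _)

end ZeroOrder

section LogKer

variable {A K : ℝ → ℝ → ℂ} {f : ℝ → ℂ}

/-- The remainder of `logKer A K` after subtraction of a multiple of the periodic logarithm. -/
noncomputable def smoothPart (A K : ℝ → ℝ → ℂ) (s t : ℝ) : ℂ :=
  K s t - Complex.I / (2 * Real.pi) * Real.log 4 * A s t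

lemma SPK.smoothPart (hA : SPK A) (hK : SPK K) : SPK (smoothPart A K) :=
  hK.sub (hA.const_mul _)

lemma logKer_eq_periodicLog_mul_add {s t : ℝ} (hst : Real.sin (Real.pi * (s - t)) ≠ 0) :
    logKer A K s t
      = periodicLog (s - t) * (Complex.I / (2 * Real.pi) * A s t) + smoothPart A K s t := by
  have hlog : periodicLog (s - t) = Real.log 4 + Real.log (Real.sin (Real.pi * (s - t)) ^ 2) :=
    Real.log_mul four_ne_zero (pow_ne_zero 2 hst)
  rw [hlog, logKer, smoothPart]
  push_cast
  ring

lemma ae_sin_pi_mul_sub_ne_zero (s : ℝ) : ∀ᵐ t, Real.sin (Real.pi * (s - t)) ≠ 0 := by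
  filter_upwards [(countable_range fun k : ℤ ↦ s - k).ae_notMem volume] with t ht
  exact sin_pi_mul_ne_zero_of_forall_ne_int fun k hk ↦ ht ⟨k, by simp [← hk]⟩

lemma Vop_logKer_eq_integral_comp_sub (hA : SPK A) (hK : SPK K) (hf : SmoothPeriodic f) (s : ℝ) :
    Vop (logKer A K) f s
      = (∫ x in (0 : ℝ)..1,
          (periodicLog x : ℂ) * (Complex.I / (2 * Real.pi) * A s (s - x) * f (s - x)))
        + ∫ x in (0 : ℝ)..1, smoothPart A K s (s - x) * f (s - x) := by
  set c : ℂ := Complex.I / (2 * Real.pi)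
  have hAf := ((hA.const_mul c).shear.mul_comp_sub hf).row s
  have hKf := ((hA.smoothPart hK).shear.mul_comp_sub hf).row s
  have hper : Function.Periodic (fun x ↦ (periodicLog x : ℂ) * (c * A s (s - x) * f (s - x))
      + smoothPart A K s (s - x) * f (s - x)) 1 := fun x ↦ by
    simp only [periodicLog_periodic x, hAf.periodic x, hKf.periodic x]
  rw [← integral_add (intervalIntegrable_periodicLog_mul hAf.continuous)
    (hKf.continuous.intervalIntegrable _ _), ← integral_comp_sub_left_of_periodic hper s, Vop]
  refine intervalIntegral.integral_congr_ae ?_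
  filter_upwards [ae_sin_pi_mul_sub_ne_zero s] with t ht _
  rw [logKer_eq_periodicLog_mul_add ht, sub_sub_cancel]
  ring

lemma Vop_logKer_eq_convOp (hA : SPK A) (hK : SPK K) (hf : SmoothPeriodic f) :
    Vop (logKer A K) f = fun s ↦
      convOp (fun x ↦ (periodicLog x : ℂ))
          (fun s x ↦ Complex.I / (2 * Real.pi) * A s (s - x)) f s
        + convOp 1 (fun s x ↦ smoothPart A K s (s - x)) f s := by
  funext s
  simp only [Vop_logKer_eq_integral_comp_sub hA hK hf, convOp, Pi.one_apply, one_mul]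

lemma smoothPeriodic_Vop_logKer (hA : SPK A) (hK : SPK K) (hf : SmoothPeriodic f) :
    SmoothPeriodic (Vop (logKer A K) f) := by
  rw [Vop_logKer_eq_convOp hA hK hf]
  exact (smoothPeriodic_convOp intervalIntegrable_periodicLog (hA.const_mul _).shear hf).add
    (smoothPeriodic_convOp intervalIntegrable_const (hA.smoothPart hK).shear hf)

lemma exists_sobNorm_Vop_logKer_deriv_le (hA : SPK A) (hK : SPK K) (k : ℕ) :
    ∃ C ≥ 0, ∀ f, SmoothPeriodic f →
      sobNorm k (Vop (logKer A K) (deriv f)) ≤ C * sobNorm k f := by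
  have hw : IntervalIntegrable (1 : ℝ → ℂ) volume 0 1 := intervalIntegrable_const
  have hA' := (hA.const_mul (Complex.I / (2 * Real.pi))).shear
  have hK' := (hA.smoothPart hK).shear
  obtain ⟨C, hC0, hC⟩ := exists_sobNorm_convOp_deriv_le intervalIntegrable_periodicLog
    (fun _ ↦ exists_sobNorm_zero_convOp_periodicLog_deriv_le) k hA'
  obtain ⟨D, hD0, hD⟩ := exists_sobNorm_convOp_deriv_le hw
    (fun _ ↦ exists_sobNorm_zero_convOp_one_deriv_le) k hK'
  refine ⟨C + D, by positivity, fun f hf ↦ ?_⟩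
  rw [Vop_logKer_eq_convOp hA hK hf.deriv, add_mul]
  refine (sobNorm_add_le (smoothPeriodic_convOp intervalIntegrable_periodicLog hA' hf.deriv)
    (smoothPeriodic_convOp hw hK' hf.deriv) k).trans (add_le_add (hC f hf) (hD f hf))

end LogKer

/-! ### Midpoint errors on the shifted grid -/

section Midpoint

variable {E : Type*} [NormedAddCommGroup E] [NormedSpace ℝ E] {f f' f'' : ℝ → E} {t r : ℝ}

lemma norm_image_add_sub_image_sub_le [CompleteSpace E] (hf : ∀ x, HasDerivAt f (f' x) x)
    (hf' : Continuous f') {y : ℝ} (hy : y ∈ Icc 0 r) :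
    ‖f (t + y) - f (t - y)‖ ≤ ∫ x in (t - r)..(t + r), ‖f' x‖ := by
  obtain ⟨hy0, hyr⟩ := hy
  rw [← integral_eq_sub_of_hasDerivAt (fun x _ ↦ hf x) (hf'.intervalIntegrable _ _)]
  refine (intervalIntegral.norm_integral_le_integral_norm (by linarith)).trans ?_
  exact integral_mono_interval (by linarith) (by linarith) (by linarith)
    (Eventually.of_forall fun _ ↦ norm_nonneg _) (hf'.norm.intervalIntegrable _ _)

lemma norm_image_add_add_image_sub_sub_le [CompleteSpace E] (hf : ∀ x, HasDerivAt f (f' x) x)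
    (hf' : ∀ x, HasDerivAt f' (f'' x) x) (hf'' : Continuous f'') {y : ℝ} (hy : y ∈ Icc 0 r) :
    ‖f (t + y) + f (t - y) - (2 : ℝ) • f t‖ ≤ r * ∫ x in (t - r)..(t + r), ‖f'' x‖ := by
  have hderiv : ∀ x ∈ Icc 0 r, HasDerivWithinAt (fun y ↦ f (t + y) + f (t - y))
      (f' (t + x) - f' (t - x)) (Icc 0 r) x := fun x _ ↦ by
    simpa [sub_eq_add_neg] using
      (((hf (t + x)).comp_const_add t x).fun_add ((hf (t - x)).comp_const_sub t x)).hasDerivWithinAt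
  have hmain := norm_image_sub_le_of_norm_deriv_le_segment' hderiv
    (fun x hx ↦ norm_image_add_sub_image_sub_le (t := t) hf' hf'' (Ico_subset_Icc_self hx)) y hy
  rw [add_zero, sub_zero, sub_zero, ← two_smul ℝ (f t)] at hmain
  rw [mul_comm]
  exact hmain.trans (mul_le_mul_of_nonneg_left hy.2
    (intervalIntegral.integral_nonneg (by linarith [hy.1.trans hy.2]) fun _ _ ↦ norm_nonneg _))

lemma norm_image_add_sub_image_sub_sub_le [CompleteSpace E] {g : ℝ → E}
    (hg : ∀ x, HasDerivAt g (f x) x) (hf : ∀ x, HasDerivAt f (f' x) x)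
    (hf' : ∀ x, HasDerivAt f' (f'' x) x) (hf'' : Continuous f'') (hr : 0 ≤ r) :
    ‖g (t + r) - g (t - r) - (2 * r) • f t‖ ≤ r ^ 2 * ∫ x in (t - r)..(t + r), ‖f'' x‖ := by
  have hderiv : ∀ x ∈ Icc 0 r, HasDerivWithinAt (fun y ↦ g (t + y) - g (t - y) - (2 * y) • f t)
      (f (t + x) + f (t - x) - (2 : ℝ) • f t) (Icc 0 r) x := fun x _ ↦ by
    have hlin : HasDerivAt (fun y : ℝ ↦ (2 * y) • f t) ((2 : ℝ) • f t) x := by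
      simpa using ((hasDerivAt_id x).const_mul 2).smul_const (f t)
    simpa [sub_eq_add_neg] using ((((hg (t + x)).comp_const_add t x).fun_sub
      ((hg (t - x)).comp_const_sub t x)).fun_sub hlin).hasDerivWithinAt (s := Icc 0 r)
  have hmain := norm_image_sub_le_of_norm_deriv_le_segment' hderiv
    (fun x hx ↦ norm_image_add_add_image_sub_sub_le (t := t) hf hf' hf'' (Ico_subset_Icc_self hx))
    r ⟨hr, le_rfl⟩
  simp only [add_zero, sub_zero, sub_self, mul_zero, zero_smul] at hmain
  linarith

lemma sq_integral_le_mul_integral_sq {u : ℝ → ℝ} (hu : Continuous u) {a b : ℝ} (hab : a ≤ b) :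
    (∫ x in a..b, u x) ^ 2 ≤ (b - a) * ∫ x in a..b, u x ^ 2 := by
  set m := ∫ x in a..b, u x with hm
  have hexpand : ∫ x in a..b, ((b - a) * u x - m) ^ 2
      = (b - a) * ((b - a) * (∫ x in a..b, u x ^ 2) - m ^ 2) := by
    have hcongr : ∀ x, ((b - a) * u x - m) ^ 2
        = (b - a) ^ 2 * u x ^ 2 - 2 * (b - a) * m * u x + m ^ 2 := fun x ↦ by ring
    simp_rw [hcongr]
    rw [integral_add (by apply Continuous.intervalIntegrable; fun_prop) intervalIntegrable_const,
      intervalIntegral.integral_sub (by apply Continuous.intervalIntegrable; fun_prop)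
        (by apply Continuous.intervalIntegrable; fun_prop),
      intervalIntegral.integral_const_mul, intervalIntegral.integral_const_mul, ← hm,
      intervalIntegral.integral_const, smul_eq_mul]
    ring
  rcases hab.eq_or_lt with rfl | hab
  · simp [hm]
  have hnonneg : 0 ≤ ∫ x in a..b, ((b - a) * u x - m) ^ 2 :=
    intervalIntegral.integral_nonneg hab.le fun _ _ ↦ sq_nonneg _
  rw [hexpand] at hnonneg
  linarith [nonneg_of_mul_nonneg_right hnonneg (sub_pos.2 hab)]

end Midpoint

section Grid

variable {h ε : ℝ} {N : ℕ}

lemma sg_eq_tg_sub (h ε : ℝ) (j : ℤ) : sg h ε j = tg h ε j - h / 2 := by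
  rw [sg, tg]; ring

lemma sg_add_one_eq_tg_add (h ε : ℝ) (j : ℤ) : sg h ε (j + 1) = tg h ε j + h / 2 := by
  rw [sg, tg]; push_cast; ring

lemma sum_integral_cell {E : Type*} [NormedAddCommGroup E] [NormedSpace ℝ E] {u : ℝ → E}
    (hper : Function.Periodic u 1) (hu : ∀ a b, IntervalIntegrable u volume a b) (hN : 0 < N) :
    ∑ i ∈ Finset.range N, ∫ x in (sg (1 / N) ε i)..(sg (1 / N) ε (i + 1)), u x
      = ∫ x in (0 : ℝ)..1, u x := by
  have hlast : sg (1 / N) ε 0 + 1 = sg (1 / N) ε N := by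
    rw [sg, sg]; push_cast; field_simp; ring
  have hadj := sum_integral_adjacent_intervals (μ := volume) (f := u)
    (a := fun i : ℕ ↦ sg (1 / (N : ℝ)) ε i) (n := N) fun _ _ ↦ hu _ _
  push_cast at hadj
  rw [hadj, ← hlast, hper.intervalIntegral_add_eq _ 0, zero_add]

/-- The error of the central difference quotient of `g` over the `i`-th cell, multiplied by `h`. -/
noncomputable def midpointError (g : ℝ → ℂ) (h ε : ℝ) (i : ℤ) : ℂ :=
  g (sg h ε (i + 1)) - g (sg h ε i) - h * deriv g (tg h ε i)

lemma norm_midpointError_sq_le {g : ℝ → ℂ} (hg : SmoothPeriodic g) (hh : 0 ≤ h) (i : ℤ) :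
    ‖midpointError g h ε i‖ ^ 2
      ≤ h ^ 5 * ∫ x in (sg h ε i)..(sg h ε (i + 1)), ‖deriv (deriv (deriv g)) x‖ ^ 2 := by
  rw [midpointError, sg_add_one_eq_tg_add, sg_eq_tg_sub]
  set t := tg h ε i
  have hcont := hg.deriv.deriv.deriv.continuous.norm
  have hmid := norm_image_add_sub_image_sub_sub_le (t := t) hg.hasDerivAt hg.deriv.hasDerivAt
    hg.deriv.deriv.hasDerivAt hg.deriv.deriv.deriv.continuous (r := h / 2) (by positivity)
  have hjensen := sq_integral_le_mul_integral_sq hcont (a := t - h / 2) (b := t + h / 2)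
    (by linarith)
  have hnonneg : 0 ≤ ∫ x in (t - h / 2)..(t + h / 2), ‖deriv (deriv (deriv g)) x‖ ^ 2 :=
    intervalIntegral.integral_nonneg (by linarith) fun _ _ ↦ by positivity
  rw [mul_div_cancel₀ h two_ne_zero, Complex.real_smul] at hmid
  calc _ ≤ ((h / 2) ^ 2 * ∫ x in (t - h / 2)..(t + h / 2), ‖deriv (deriv (deriv g)) x‖) ^ 2 :=
        pow_le_pow_left₀ (norm_nonneg _) hmid 2
    _ = h ^ 4 / 16 * (∫ x in (t - h / 2)..(t + h / 2), ‖deriv (deriv (deriv g)) x‖) ^ 2 := by ring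
    _ ≤ h ^ 4 / 16 * ((t + h / 2 - (t - h / 2)) *
          ∫ x in (t - h / 2)..(t + h / 2), ‖deriv (deriv (deriv g)) x‖ ^ 2) := by gcongr
    _ = h ^ 5 / 16 * ∫ x in (t - h / 2)..(t + h / 2), ‖deriv (deriv (deriv g)) x‖ ^ 2 := by ring
    _ ≤ _ := by
        gcongr
        exact div_le_self (by positivity) (by norm_num)

lemma sum_norm_midpointError_sq_le {g : ℝ → ℂ} (hg : SmoothPeriodic g) (hN : 0 < N) :
    ∑ i ∈ Finset.range N, ‖midpointError g (1 / N) ε i‖ ^ 2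
      ≤ (1 / N) ^ 5 * ((2 * Real.pi) ^ 3 * sobNorm (3 : ℕ) g) ^ 2 := by
  have hg3 := hg.deriv.deriv.deriv
  have hderiv : sobNorm (0 : ℕ) (deriv (deriv (deriv g))) ≤ (2 * Real.pi) ^ 3 * sobNorm (3 : ℕ) g :=
    calc _ ≤ 2 * Real.pi * (2 * Real.pi * (2 * Real.pi * sobNorm (3 : ℕ) g)) := by
          refine (sobNorm_deriv_le hg.deriv.deriv 0).trans ?_
          gcongr
          refine (sobNorm_deriv_le hg.deriv 1).trans ?_
          gcongr
          exact sobNorm_deriv_le hg 2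
      _ = _ := by ring
  calc _ ≤ ∑ i ∈ Finset.range N, (1 / (N : ℝ)) ^ 5 *
          ∫ x in (sg (1 / N) ε i)..(sg (1 / N) ε (i + 1)), ‖deriv (deriv (deriv g)) x‖ ^ 2 :=
        Finset.sum_le_sum fun i _ ↦ norm_midpointError_sq_le hg (by positivity) i
    _ = (1 / (N : ℝ)) ^ 5 * sobNorm (0 : ℕ) (deriv (deriv (deriv g))) ^ 2 := by
        rw [← Finset.mul_sum, sobNorm_zero_sq hg3,
          sum_integral_cell (u := fun x ↦ ‖deriv (deriv (deriv g)) x‖ ^ 2)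
            (fun x ↦ by simp only [hg3.periodic x])
            (fun a b ↦ (hg3.continuous.norm.pow 2).intervalIntegrable a b) hN]
    _ ≤ _ := by
        gcongr
        exact sobNorm_nonneg _ _

/-- The error of the midpoint rule for the integral of `F` over the `i`-th cell. -/
noncomputable def cellError (F : ℝ → ℂ) (h ε : ℝ) (i : ℤ) : ℂ :=
  (∫ t in (sg h ε i)..(sg h ε (i + 1)), F t) - h * F (tg h ε i)

lemma norm_cellError_le {F : ℝ → ℂ} (hF : SmoothPeriodic F) {L : ℝ}
    (hL : ∀ x, ‖deriv F x‖ ≤ L) (hh : 0 ≤ h) (i : ℤ) :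
    ‖cellError F h ε i‖ ≤ L * h ^ 2 := by
  rw [cellError, sg_add_one_eq_tg_add, sg_eq_tg_sub]
  set t₀ := tg h ε i
  have hconst : h * F t₀ = ∫ _ in (t₀ - h / 2)..(t₀ + h / 2), F t₀ := by
    rw [intervalIntegral.integral_const, Complex.real_smul, add_sub_sub_cancel, add_halves]
  have hlip : ∀ x ∈ uIoc (t₀ - h / 2) (t₀ + h / 2), ‖F x - F t₀‖ ≤ L * h := by
    intro x hx
    rw [uIoc_of_le (by linarith)] at hx
    refine (convex_univ.norm_image_sub_le_of_norm_deriv_le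
      (fun x _ ↦ (hF.hasDerivAt x).differentiableAt) (fun x _ ↦ hL x) (mem_univ _)
      (mem_univ _)).trans (mul_le_mul_of_nonneg_left ?_ ((norm_nonneg _).trans (hL 0)))
    rw [Real.norm_eq_abs, abs_le]
    constructor <;> linarith [hx.1, hx.2]
  rw [hconst, ← intervalIntegral.integral_sub (hF.continuous.intervalIntegrable _ _)
    intervalIntegrable_const]
  refine (norm_integral_le_of_norm_le_const hlip).trans_eq ?_
  rw [add_sub_sub_cancel, add_halves, abs_of_nonneg hh]
  ring

lemma exists_norm_cellError_mul_le {a : ℝ → ℂ} (ha : SmoothPeriodic a) :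
    ∃ C ≥ 0, ∀ f, SmoothPeriodic f → ∀ ⦃h : ℝ⦄, 0 ≤ h → ∀ ε (i : ℤ),
      ‖cellError (fun t ↦ a t * f t) h ε i‖ ≤ C * h ^ 2 * sobNorm (3 : ℕ) f := by
  obtain ⟨S, hS0, hS⟩ := exists_norm_le_mul_sobNorm
  obtain ⟨C, hC0, hC⟩ := (SPK.of_snd ha).exists_sobNorm_row_mul_le 2
  refine ⟨S * (2 * Real.pi * C), by positivity, fun f hf h hh ε i ↦ ?_⟩
  have haf := ha.mul hf
  refine (norm_cellError_le haf (L := S * (2 * Real.pi * (C * sobNorm (3 : ℕ) f)))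
    (fun x ↦ ?_) hh i).trans_eq (by ring)
  refine (hS _ haf.deriv x).trans (mul_le_mul_of_nonneg_left ?_ hS0)
  refine (sobNorm_deriv_le haf 1).trans (mul_le_mul_of_nonneg_left ?_ Real.two_pi_pos.le)
  exact (hC 0 f hf).trans (mul_le_mul_of_nonneg_left (sobNorm_mono hf (by norm_num)) hC0)

end Grid

section StepFunction

variable {N : ℕ} {ε : ℝ} {v : ZMod N → ℂ}

lemma stepf_periodic : Function.Periodic (stepf N ε v) 1 := fun s ↦ by
  have hshift : (s + 1) * (N : ℝ) + 1 / 2 - ε = s * N + 1 / 2 - ε + (N : ℕ) := by ring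
  simp [stepf, hshift, Int.floor_add_natCast, -one_div]

lemma measurable_stepf : Measurable (stepf N ε v) :=
  (measurable_from_top (f := fun k : ℤ ↦ v k)).comp
    (Int.measurable_floor.comp (by fun_prop : Measurable fun s : ℝ ↦ s * N + 1 / 2 - ε))

variable [NeZero N]

lemma stepf_of_mem_Ioo (i : ZMod N) {s : ℝ}
    (hs : s ∈ Ioo (sg (1 / N) ε i.val) (sg (1 / N) ε (i.val + 1))) : stepf N ε v s = v i := by
  have hN : (0 : ℝ) < N := by exact_mod_cast NeZero.pos N
  obtain ⟨hlt, hgt⟩ := hs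
  rw [sg, mul_one_div, div_lt_iff₀ hN] at hlt
  rw [sg, mul_one_div, lt_div_iff₀ hN] at hgt
  have hfloor : ⌊s * N + 1 / 2 - ε⌋ = (i.val : ℤ) := by
    rw [Int.floor_eq_iff]
    push_cast at *
    constructor <;> linarith
  rw [stepf, hfloor, Int.cast_natCast, ZMod.natCast_zmod_val]

lemma sum_zmod_val {M : Type*} [AddCommMonoid M] (u : ℕ → M) :
    ∑ i : ZMod N, u i.val = ∑ k ∈ Finset.range N, u k :=
  Finset.sum_bij' (fun i _ ↦ i.val) (fun k _ ↦ (k : ZMod N))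
    (fun i _ ↦ Finset.mem_range.2 i.val_lt) (fun _ _ ↦ Finset.mem_univ _)
    (fun i _ ↦ i.natCast_zmod_val) (fun _ hk ↦ ZMod.val_cast_of_lt (Finset.mem_range.1 hk))
    fun _ _ ↦ rfl

lemma sum_zmod_integral_cell {E : Type*} [NormedAddCommGroup E] [NormedSpace ℝ E] {u : ℝ → E}
    (hper : Function.Periodic u 1) (hu : ∀ a b, IntervalIntegrable u volume a b) :
    ∑ i : ZMod N, ∫ x in (sg (1 / N) ε i.val)..(sg (1 / N) ε (i.val + 1)), u x
      = ∫ x in (0 : ℝ)..1, u x := by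
  rw [← sum_integral_cell hper hu (NeZero.pos N), ← sum_zmod_val]

lemma integral_stepf_mul {F : ℝ → ℂ} (hF : SmoothPeriodic F) :
    ∫ t in (0 : ℝ)..1, stepf N ε v t * F t
      = ∑ i : ZMod N, v i * ∫ t in (sg (1 / N) ε i.val)..(sg (1 / N) ε (i.val + 1)), F t := by
  have hper : Function.Periodic (fun t ↦ stepf N ε v t * F t) 1 := fun t ↦ by
    simp only [stepf_periodic (v := v) t, hF.periodic t]
  have hbound : ∀ x, ‖stepf N ε v x‖ ≤ ∑ i, ‖v i‖ := fun x ↦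
    Finset.single_le_sum (f := fun i ↦ ‖v i‖) (fun _ _ ↦ norm_nonneg _) (Finset.mem_univ _)
  have hint : ∀ a b, IntervalIntegrable (fun t ↦ stepf N ε v t * F t) volume a b := fun a b ↦
    intervalIntegrable_iff.2 <| (hF.continuous.intervalIntegrable a b).def'.bdd_mul
      measurable_stepf.aestronglyMeasurable (Eventually.of_forall hbound)
  rw [← sum_zmod_integral_cell (N := N) (ε := ε) hper hint]
  refine Finset.sum_congr rfl fun i _ ↦ ?_
  rw [← intervalIntegral.integral_const_mul]
  refine integral_congr_Ioo_of_le ?_ fun s hs ↦ ?_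
  · rw [sg_add_one_eq_tg_add, sg_eq_tg_sub]
    linarith [show (0 : ℝ) ≤ 1 / N by positivity]
  · simp only [stepf_of_mem_Ioo i hs]

end StepFunction

/-! ### Nyström quadrature for logarithmic kernels -/

section Nystrom

variable {A K : ℝ → ℝ → ℂ} {f : ℝ → ℂ} {N : ℕ} {s : ℝ}

/-- The error at `s` of the Nyström discretisation of `Vop (logKer A K) f` on the grid `j / N`,
corrected by the leading term of its expansion. -/
noncomputable def nystromError (A K : ℝ → ℝ → ℂ) (f : ℝ → ℂ) (N : ℕ) (s : ℝ) : ℂ :=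
  Vop (logKer A K) f s - 1 / N * (∑ j ∈ Finset.range N, logKer A K s (j / N) * f (j / N))
    + 1 / N * (Complex.I / (2 * Real.pi) * periodicLog (N * s)) * (A s s * f s)

lemma sin_pi_mul_sub_div_ne_zero (hN : 0 < N) (hs : Real.sin (Real.pi * (N * s)) ≠ 0) (j : ℕ) :
    Real.sin (Real.pi * (s - j / N)) ≠ 0 := by
  refine sin_pi_mul_ne_zero_of_forall_ne_int fun k hk ↦ hs ?_
  have hNs : N * s = ((N * k + j : ℤ) : ℝ) := by
    push_cast
    rw [← hk]
    field_simp
    ring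
  rw [hNs, mul_comm]
  exact Real.sin_int_mul_pi _

lemma nystromError_eq (hA : SPK A) (hK : SPK K) (hf : SmoothPeriodic f) (hN : 0 < N)
    (hs : Real.sin (Real.pi * (N * s)) ≠ 0) :
    nystromError A K f N s
      = logQuadError N (fun t ↦ Complex.I / (2 * Real.pi) * A s t * f t) s
        + ((∫ t in (0 : ℝ)..1, smoothPart A K s t * f t)
          - 1 / N * ∑ j ∈ Finset.range N, smoothPart A K s (j / N) * f (j / N)) := by
  have hper := (((hA.smoothPart hK).row s).mul hf).periodic
  have hsum : ∑ j ∈ Finset.range N, logKer A K s (j / N) * f (j / N)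
      = (∑ j ∈ Finset.range N, (periodicLog (s - j / N) : ℂ)
          * (Complex.I / (2 * Real.pi) * A s (j / N) * f (j / N)))
        + ∑ j ∈ Finset.range N, smoothPart A K s (j / N) * f (j / N) := by
    rw [← Finset.sum_add_distrib]
    refine Finset.sum_congr rfl fun j _ ↦ ?_
    rw [logKer_eq_periodicLog_mul_add (sin_pi_mul_sub_div_ne_zero hN hs j)]
    ring
  rw [nystromError, logQuadError, Vop_logKer_eq_integral_comp_sub hA hK hf, hsum,
    integral_comp_sub_left_of_periodic hper s]
  ring

lemma exists_norm_nystromError_le (hA : SPK A) (hK : SPK K) :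
    ∃ C ≥ 0, ∀ f, SmoothPeriodic f → ∀ N : ℕ, 0 < N → ∀ s, Real.sin (Real.pi * (N * s)) ≠ 0 →
      ‖nystromError A K f N s‖ ≤ C / N ^ 2 * sobNorm (3 : ℕ) f := by
  have hA' := hA.const_mul (Complex.I / (2 * Real.pi))
  have hK' := hA.smoothPart hK
  obtain ⟨L, hL0, hL⟩ := exists_norm_logQuadError_le
  obtain ⟨R, hR0, hR⟩ := exists_norm_integral_sub_sum_le
  obtain ⟨CA, hCA0, hCA⟩ := hA'.exists_sobNorm_row_mul_le 3
  obtain ⟨CK, hCK0, hCK⟩ := hK'.exists_sobNorm_row_mul_le 3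
  refine ⟨L * CA + R * CK, by positivity, fun f hf N hN s hs ↦ ?_⟩
  rw [nystromError_eq hA hK hf hN hs]
  calc _ ≤ L / N ^ 2 * (CA * sobNorm (3 : ℕ) f) + R / N ^ 2 * (CK * sobNorm (3 : ℕ) f) := by
        refine norm_add_le_of_le ?_ ?_
        · refine (hL _ ((hA'.row s).mul hf) N hN s hs).trans ?_
          gcongr
          exact hCA s f hf
        · refine (hR _ ((hK'.row s).mul hf) N hN).trans ?_
          gcongr
          exact hCK s f hf
    _ = _ := by ring

end Nystrom

/-! ### The consistency error -/

section Consistency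

variable {A1 K1 A2 K2 : ℝ → ℝ → ℂ} {ε : ℝ} {φ : ℝ → ℂ} {N : ℕ} [NeZero N]

/-- The consistency error of the Nyström scheme for `Wop (logKer A1 K1) (logKer A2 K2)`, tested
against the step function with coefficients `ψ`. -/
noncomputable def consistencyError (A1 K1 A2 K2 : ℝ → ℝ → ℂ) (ε : ℝ) (φ : ℝ → ℂ) (N : ℕ) [NeZero N]
    (ψ : ZMod N → ℂ) : ℂ :=
  (1 / (N : ℂ)) * (∑ i : ZMod N,
      ψ i * Wop (logKer A1 K1) (logKer A2 K2) φ (tg (1 / (N : ℝ)) ε ((i.val : ℕ) : ℤ)))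
    - (∑ i : ZMod N, ψ i *
        (Vop (logKer A1 K1) (deriv φ) (sg (1 / (N : ℝ)) ε ((i.val : ℕ) : ℤ))
          - Vop (logKer A1 K1) (deriv φ) (sg (1 / (N : ℝ)) ε (((i.val : ℕ) : ℤ) + 1))))
    - (1 / (N : ℂ)) ^ 2 * (∑ i : ZMod N, ∑ j : ZMod N,
        ψ i * logKer A2 K2 (tg (1 / (N : ℝ)) ε ((i.val : ℕ) : ℤ))
            (tg (1 / (N : ℝ)) 0 ((j.val : ℕ) : ℤ))
          * φ (tg (1 / (N : ℝ)) 0 ((j.val : ℕ) : ℤ)))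
    + (1 / (N : ℂ)) * Cbar1 ε
        * ∫ t in (0:ℝ)..1, stepf N ε ψ t * A2 t t * φ t

lemma Cbar1_eq (ε : ℝ) : Cbar1 ε = Complex.I / (2 * Real.pi) * periodicLog ε := by
  have hpi : (Real.pi : ℂ) ≠ 0 := Complex.ofReal_ne_zero.2 Real.pi_ne_zero
  rw [Cbar1, periodicLog]
  congr 1
  field_simp
  simp

omit [NeZero N] in
lemma natCast_mul_tg (hN : N ≠ 0) (i : ℕ) : N * tg (1 / N) ε i = ε + i := by
  rw [tg]
  push_cast
  field_simp
  ring

lemma norm_sum_mul_le_of_sum_sq_le {ι : Type*} [Fintype ι] {v w : ι → ℂ} {h B : ℝ} (hh : 0 ≤ h)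
    (hB : 0 ≤ B) (hw : ∑ i, ‖w i‖ ^ 2 ≤ h ^ 5 * B ^ 2) :
    ‖∑ i, v i * w i‖ ≤ B * h ^ 2 * √(h * ∑ i, ‖v i‖ ^ 2) := by
  have hsqrt : √(∑ i, ‖w i‖ ^ 2) ≤ B * h ^ 2 * √h := by
    refine Real.sqrt_le_iff.2 ⟨by positivity, hw.trans_eq ?_⟩
    rw [mul_pow, Real.sq_sqrt hh]
    ring
  calc _ ≤ ∑ i, ‖v i‖ * ‖w i‖ :=
        (norm_sum_le _ _).trans_eq (Finset.sum_congr rfl fun i _ ↦ norm_mul _ _)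
    _ ≤ √(∑ i, ‖v i‖ ^ 2) * √(∑ i, ‖w i‖ ^ 2) := Real.sum_mul_le_sqrt_mul_sqrt _ _ _
    _ ≤ √(∑ i, ‖v i‖ ^ 2) * (B * h ^ 2 * √h) := by gcongr
    _ = _ := by rw [Real.sqrt_mul hh]; ring

lemma norm_sum_mul_le_of_norm_le {v w : ZMod N → ℂ} {B : ℝ} (hB : 0 ≤ B)
    (hw : ∀ i, ‖w i‖ ≤ B / N ^ 3) :
    ‖∑ i, v i * w i‖ ≤ B * (1 / N) ^ 2 * √(1 / N * ∑ i, ‖v i‖ ^ 2) := by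
  refine norm_sum_mul_le_of_sum_sq_le (by positivity) hB ?_
  calc _ ≤ ∑ _i : ZMod N, (B / N ^ 3) ^ 2 :=
        Finset.sum_le_sum fun i _ ↦ pow_le_pow_left₀ (norm_nonneg _) (hw i) 2
    _ = (1 / (N : ℝ)) ^ 5 * B ^ 2 := by
        have hN : (N : ℝ) ≠ 0 := Nat.cast_ne_zero.2 (NeZero.ne N)
        rw [Finset.sum_const, Finset.card_univ, ZMod.card, nsmul_eq_mul]
        field_simp

/-- The values `A2 t t * φ t` at the midpoints `t` cancel between `nystromError` and `cellError`. -/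
lemma consistencyError_eq (hA2 : SPK A2) (hφ : SmoothPeriodic φ) (ψ : ZMod N → ℂ) :
    consistencyError A1 K1 A2 K2 ε φ N ψ
      = (∑ i, ψ i * midpointError (Vop (logKer A1 K1) (deriv φ)) (1 / N) ε i.val)
        + ∑ i, ψ i * (1 / N * nystromError A2 K2 φ N (tg (1 / N) ε i.val)
            + 1 / N * Cbar1 ε * cellError (fun t ↦ A2 t t * φ t) (1 / N) ε i.val) := by
  have hstep := integral_stepf_mul (ε := ε) (v := ψ) (hA2.diag.mul hφ)
  have hnystrom : ∀ i : ℕ, ∑ j : ZMod N, logKer A2 K2 (tg (1 / N) ε i) (tg (1 / N) 0 j.val)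
      * φ (tg (1 / N) 0 j.val) = ∑ j ∈ Finset.range N, logKer A2 K2 (tg (1 / N) ε i) (j / N)
      * φ (j / N) := fun i ↦ by
    simp only [← sum_zmod_val (N := N), tg, Int.cast_natCast, add_zero, mul_one_div]
  have hlog : ∀ i : ℕ, periodicLog (N * tg (1 / N) ε i) = periodicLog ε := fun i ↦ by
    rw [natCast_mul_tg (NeZero.ne N)]
    simpa using periodicLog_periodic.nat_mul i ε
  simp only [consistencyError, mul_assoc] at hstep ⊢
  simp only [hstep, ← Finset.mul_sum, hnystrom]
  simp only [Finset.mul_sum (s := (Finset.univ : Finset (ZMod N))), ← Finset.sum_sub_distrib,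
    ← Finset.sum_add_distrib]
  refine Finset.sum_congr rfl fun i _ ↦ ?_
  rw [midpointError, nystromError, cellError, Wop, hlog, Cbar1_eq]
  push_cast
  ring

lemma exists_norm_sum_mul_midpointError_le (hA : SPK A1) (hK : SPK K1) (ε : ℝ) :
    ∃ C ≥ 0, ∀ φ, SmoothPeriodic φ → ∀ (N : ℕ) [NeZero N] (ψ : ZMod N → ℂ),
      ‖∑ i, ψ i * midpointError (Vop (logKer A1 K1) (deriv φ)) (1 / N) ε i.val‖
        ≤ C * sobNorm (3 : ℕ) φ * (1 / N) ^ 2 * √(1 / N * ∑ i, ‖ψ i‖ ^ 2) := by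
  obtain ⟨C, hC0, hC⟩ := exists_sobNorm_Vop_logKer_deriv_le hA hK 3
  refine ⟨(2 * Real.pi) ^ 3 * C, by positivity, fun φ hφ N _ ψ ↦ ?_⟩
  have hS := sobNorm_nonneg (3 : ℕ) φ
  refine norm_sum_mul_le_of_sum_sq_le (by positivity) (by positivity) ?_
  rw [sum_zmod_val fun i ↦ ‖midpointError (Vop (logKer A1 K1) (deriv φ)) (1 / N) ε i‖ ^ 2]
  refine (sum_norm_midpointError_sq_le (smoothPeriodic_Vop_logKer hA hK hφ.deriv)
    (NeZero.pos N)).trans ?_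
  rw [mul_assoc _ C]
  gcongr
  · exact mul_nonneg (by positivity) (sobNorm_nonneg _ _)
  · exact hC φ hφ

lemma exists_norm_sum_mul_nystromError_add_cellError_le (hA : SPK A2) (hK : SPK K2)
    (hε : ∀ k : ℤ, ε ≠ k) :
    ∃ C ≥ 0, ∀ φ, SmoothPeriodic φ → ∀ (N : ℕ) [NeZero N] (ψ : ZMod N → ℂ),
      ‖∑ i, ψ i * (1 / N * nystromError A2 K2 φ N (tg (1 / N) ε i.val)
          + 1 / N * Cbar1 ε * cellError (fun t ↦ A2 t t * φ t) (1 / N) ε i.val)‖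
        ≤ C * sobNorm (3 : ℕ) φ * (1 / N) ^ 2 * √(1 / N * ∑ i, ‖ψ i‖ ^ 2) := by
  obtain ⟨Q, hQ0, hQ⟩ := exists_norm_nystromError_le hA hK
  obtain ⟨D, hD0, hD⟩ := exists_norm_cellError_mul_le hA.diag
  refine ⟨Q + ‖Cbar1 ε‖ * D, by positivity, fun φ hφ N _ ψ ↦ ?_⟩
  have hS := sobNorm_nonneg (3 : ℕ) φ
  refine norm_sum_mul_le_of_norm_le (by positivity) fun i ↦ ?_
  have hsin : Real.sin (Real.pi * (N * tg (1 / N) ε i.val)) ≠ 0 := by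
    refine sin_pi_mul_ne_zero_of_forall_ne_int fun k hk ↦ hε (k - i.val) ?_
    rw [natCast_mul_tg (NeZero.ne N)] at hk
    push_cast
    linarith
  calc _ ≤ 1 / N * (Q / N ^ 2 * sobNorm (3 : ℕ) φ)
        + 1 / N * ‖Cbar1 ε‖ * (D * (1 / N) ^ 2 * sobNorm (3 : ℕ) φ) := by
        refine norm_add_le_of_le ?_ ?_
        · rw [norm_mul, norm_div, norm_one, Complex.norm_natCast]
          gcongr
          exact hQ φ hφ N (NeZero.pos N) _ hsin
        · rw [norm_mul, norm_mul, norm_div, norm_one, Complex.norm_natCast]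
          gcongr
          exact hD φ hφ (by positivity) ε _
    _ = _ := by
        field_simp

end Consistency

theorem stmt_13_general
    {A1 K1 A2 K2 : ℝ → ℝ → ℂ} (hA1 : SPK A1) (hK1 : SPK K1) (hA2 : SPK A2) (hK2 : SPK K2)
    {ε : ℝ} (hε : ∀ k : ℤ, ε ≠ k) :
    ∃ C > 0, ∀ φ, SmoothPeriodic φ → ∀ (N : ℕ) [NeZero N] (ψ : ZMod N → ℂ),
      ‖consistencyError A1 K1 A2 K2 ε φ N ψ‖
        ≤ C * (1 / N) ^ 2 * √(1 / N * ∑ i, ‖ψ i‖ ^ 2) * sobNorm 3 φ := by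
  obtain ⟨P, hP0, hP⟩ := exists_norm_sum_mul_midpointError_le hA1 hK1 ε
  obtain ⟨Q, hQ0, hQ⟩ := exists_norm_sum_mul_nystromError_add_cellError_le hA2 hK2 hε
  refine ⟨P + Q + 1, by positivity, fun φ hφ N _ ψ ↦ ?_⟩
  have hS := sobNorm_nonneg 3 φ
  have hmid := hP φ hφ N ψ
  have hquad := hQ φ hφ N ψ
  rw [Nat.cast_ofNat] at hmid hquad
  rw [consistencyError_eq hA2 hφ]
  calc _ ≤ (P + Q) * (1 / N) ^ 2 * √(1 / N * ∑ i, ‖ψ i‖ ^ 2) * sobNorm 3 φ :=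
        (norm_add_le_of_le hmid hquad).trans_eq (by ring)
    _ ≤ _ := by gcongr ?_ * _ * _ * _; linarith

/-- first-order consistency expansion of the Nyström scheme:
`|h Σ_i ψ_i (Wφ)(t_{i+ε}) − Σ_i ψ_i [(V₁φ′)(s_{i+ε}) − (V₁φ′)(s_{i+1+ε})]
  − h² Σ_{i,j} ψ_i V₂(t_{i+ε},t_j) φ(t_j) + h C̄₁(ε) ∫₀¹ ψ_h A₂(t,t) φ| ≤ C h² ‖ψ_h‖₀ ‖φ‖₃`. -/
theorem stmt_13
    (A1 K1 A2 K2 : ℝ → ℝ → ℂ) (hA1 : SPK A1) (hK1 : SPK K1) (hA2 : SPK A2) (hK2 : SPK K2)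
    (α : ℂ) (hα : α ≠ 0) (hdiag : ∀ s : ℝ, A1 s s = α)
    (ε : ℝ) (hε : ∀ k : ℤ, ε ≠ (k : ℝ) / 2) :
    ∃ C > (0:ℝ), ∀ φ : ℝ → ℂ, ContDiff ℝ (⊤ : ℕ∞) φ → Function.Periodic φ 1 →
      ∀ (N : ℕ) [NeZero N], ∀ ψ : ZMod N → ℂ,
        ‖(1 / (N : ℂ)) * (∑ i : ZMod N,
              ψ i * Wop (logKer A1 K1) (logKer A2 K2) φ (tg (1 / (N : ℝ)) ε ((i.val : ℕ) : ℤ)))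
            - (∑ i : ZMod N, ψ i *
                (Vop (logKer A1 K1) (deriv φ) (sg (1 / (N : ℝ)) ε ((i.val : ℕ) : ℤ))
                  - Vop (logKer A1 K1) (deriv φ) (sg (1 / (N : ℝ)) ε (((i.val : ℕ) : ℤ) + 1))))
            - (1 / (N : ℂ)) ^ 2 * (∑ i : ZMod N, ∑ j : ZMod N,
                ψ i * logKer A2 K2 (tg (1 / (N : ℝ)) ε ((i.val : ℕ) : ℤ))
                    (tg (1 / (N : ℝ)) 0 ((j.val : ℕ) : ℤ))
                  * φ (tg (1 / (N : ℝ)) 0 ((j.val : ℕ) : ℤ)))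
            + (1 / (N : ℂ)) * Cbar1 ε
                * ∫ t in (0:ℝ)..1, stepf N ε ψ t * A2 t t * φ t‖ ≤
          C * (1 / (N : ℝ)) ^ 2
            * Real.sqrt ((1 / (N : ℝ)) * ∑ i : ZMod N, ‖ψ i‖ ^ 2) * sobNorm 3 φ := by
  obtain ⟨C, hC0, hC⟩ := stmt_13_general hA1 hK1 hA2 hK2
    fun k hk ↦ hε (2 * k) (by push_cast; linarith)
  exact ⟨C, hC0, fun φ hφ hper N _ ψ ↦ hC φ ⟨hφ, hper⟩ N ψ⟩
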